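/- Let X_1,...,X_n be bounded real random variables with H(X_i) > −∞ for all i. Then I_sym(X_1,...,X_n) = Ī_sym(X_1,...,X_n) = S(μ_{(X_1,...,X_n)}, μ_{X_1}⊗⋯⊗μ_{X_n}), the relative entropy of the joint distribution with respect to the product of marginals. In particular, I_sym(X_1,...,X_n) = 0 if and only if X_1,...,X_n are independent. -/

import Mathlib

open MeasureTheory Filter
open scoped Classical ENNReal

/-- Normalized coordinate sum `κ_N(x) = N⁻¹ ∑_j x_j`. -/
noncomputable def kappa {N : ℕ} (x : Fin N → ℝ) : ℝ := (∑ j, x j) / N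

/-- The micro-state set `Δ_R(X₁,…,Xₙ;N,m,δ)`: `n`-tuples of vectors in
`[-R,R]^N` whose normalized mixed moments up to order `m` approximate the
joint moments of `(X₁,…,Xₙ)` within `δ`. -/
noncomputable def DeltaR {Ω : Type*} [MeasurableSpace Ω] (μ : Measure Ω)
    {n : ℕ} (X : Fin n → Ω → ℝ) (R : ℝ) (N m : ℕ) (δ : ℝ) :
    Set (Fin n → Fin N → ℝ) :=
  {x | (∀ i j, |x i j| ≤ R) ∧
    ∀ k : ℕ, 1 ≤ k → k ≤ m → ∀ idx : Fin k → Fin n,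
      |kappa (fun j => ∏ l, x (idx l) j) - ∫ ω, ∏ l, X (idx l) ω ∂μ| < δ}

/-- The permutation micro-state set `Δ_{sym,R}(X₁,…,Xₙ;N,m,δ) ⊆ S_N^n`:
tuples `(σ₁,…,σₙ)` such that `(σ₁(x₁),…,σₙ(xₙ)) ∈ Δ_R` for some nondecreasing
`x₁,…,xₙ ∈ ℝ^N_≤`. -/
noncomputable def DeltaSymR {Ω : Type*} [MeasurableSpace Ω] (μ : Measure Ω)
    {n : ℕ} (X : Fin n → Ω → ℝ) (R : ℝ) (N m : ℕ) (δ : ℝ) :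
    Set (Fin n → Equiv.Perm (Fin N)) :=
  {σ | ∃ x : Fin n → Fin N → ℝ, (∀ i, Monotone (x i)) ∧
    (fun i j => x i ((σ i)⁻¹ j)) ∈ DeltaR μ X R N m δ}

/-- `(1/N) log γ_{S_N}^{⊗n}(Δ_{sym,R}(X₁,…,Xₙ;N,m,δ))`, the normalized log of
the uniform probability of the permutation micro-states. -/
noncomputable def symQ {Ω : Type*} [MeasurableSpace Ω] (μ : Measure Ω)
    {n : ℕ} (X : Fin n → Ω → ℝ) (R : ℝ) (N m : ℕ) (δ : ℝ) : ℝ :=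
  Real.log ((Nat.card (DeltaSymR μ X R N m δ) : ℝ) / (N.factorial : ℝ) ^ n) / N

/-- `(1/N) log λ_N^{⊗n}(Δ_R(X₁,…,Xₙ;N,m,δ))`, the normalized log-volume of the
micro-states. -/
noncomputable def volQ {Ω : Type*} [MeasurableSpace Ω] (μ : Measure Ω)
    {n : ℕ} (X : Fin n → Ω → ℝ) (R : ℝ) (N m : ℕ) (δ : ℝ) : ℝ :=
  Real.log (volume (DeltaR μ X R N m δ)).toReal / N

/-- The mutual information `I_sym`, via `limsup` in `N` and the limit
(= infimum, by monotonicity) over `m → ∞`, `δ → 0+`. -/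
noncomputable def Isym {Ω : Type*} [MeasurableSpace Ω] (μ : Measure Ω)
    {n : ℕ} (X : Fin n → Ω → ℝ) (R : ℝ) : EReal :=
  -(⨅ (m : ℕ) (δ : ℝ) (_ : 0 < δ),
      Filter.limsup (fun N : ℕ => ((symQ μ X R N m δ : ℝ) : EReal)) atTop)

/-- The upper mutual information `Ī_sym`, via `liminf` in `N`. -/
noncomputable def IsymUpper {Ω : Type*} [MeasurableSpace Ω] (μ : Measure Ω)
    {n : ℕ} (X : Fin n → Ω → ℝ) (R : ℝ) : EReal :=
  -(⨅ (m : ℕ) (δ : ℝ) (_ : 0 < δ),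
      Filter.liminf (fun N : ℕ => ((symQ μ X R N m δ : ℝ) : EReal)) atTop)

/-- Boltzmann–Gibbs (differential) entropy of `μ` with respect to a reference
measure `vol`, with value `⊥` (i.e. `-∞`) when `μ` has no density. -/
noncomputable def diffEntropy {E : Type*} [MeasurableSpace E] (vol μ : Measure E) : EReal :=
  if μ ≪ vol then
    ((∫⁻ x, ENNReal.ofReal (Real.negMulLog (μ.rnDeriv vol x).toReal) ∂vol : ℝ≥0∞) : EReal)
      - ((∫⁻ x, ENNReal.ofReal (-(Real.negMulLog (μ.rnDeriv vol x).toReal)) ∂vol : ℝ≥0∞) : EReal)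
  else ⊥

/-- Lemma 1.2 of the paper (assumed): the Boltzmann–Gibbs entropy is the
asymptotic normalized log-volume of the micro-state sets `Δ_R`, the limit in
`N` existing. -/
def MicrostateVolumeFormula {Ω : Type*} [MeasurableSpace Ω] (μ : Measure Ω)
    {n : ℕ} (X : Fin n → Ω → ℝ) (R : ℝ) : Prop :=
  diffEntropy volume (Measure.map (fun ω (i : Fin n) => X i ω) μ)
      = ⨅ (m : ℕ) (δ : ℝ) (_ : 0 < δ),
          Filter.limsup (fun N : ℕ => ((volQ μ X R N m δ : ℝ) : EReal)) atTop ∧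
  diffEntropy volume (Measure.map (fun ω (i : Fin n) => X i ω) μ)
      = ⨅ (m : ℕ) (δ : ℝ) (_ : 0 < δ),
          Filter.liminf (fun N : ℕ => ((volQ μ X R N m δ : ℝ) : EReal)) atTop

/-- Relative entropy (Kullback–Leibler divergence) `S(μ,ν)`, with value `⊤`
(i.e. `+∞`) when `μ` is not absolutely continuous with respect to `ν`. -/
noncomputable def relEntropy {E : Type*} [MeasurableSpace E] (μ ν : Measure E) : EReal :=
  if μ ≪ ν then
    ((∫⁻ x, ENNReal.ofReal (Real.log (μ.rnDeriv ν x).toReal) ∂μ : ℝ≥0∞) : EReal)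
      - ((∫⁻ x, ENNReal.ofReal (-(Real.log (μ.rnDeriv ν x).toReal)) ∂μ : ℝ≥0∞) : EReal)
  else ⊤


def MClose (R : ℝ) (m N : ℕ) (x y : Fin N → ℝ) : Prop :=
  (∀ j, |x j| ≤ R) ∧ (∀ j, |y j| ≤ R) ∧
    ∀ k : ℕ, 1 ≤ k → k ≤ m → |∑ j, x j ^ k - ∑ j, y j ^ k| ≤ N * (1 / ((m : ℝ) + 1))

lemma MClose.symm {R : ℝ} {m N : ℕ} {x y : Fin N → ℝ} (h : MClose R m N x y) :
    MClose R m N y x :=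
  ⟨h.2.1, h.1, fun k h1 h2 => by rw [abs_sub_comm]; exact h.2.2 k h1 h2⟩

lemma poly_close (R : ℝ) (p : Polynomial ℝ) (η : ℝ) (hη : 0 < η) :
    ∀ᶠ m : ℕ in atTop, ∀ (N : ℕ) (x y : Fin N → ℝ), MClose R m N x y →
      |∑ j, p.eval (x j) - ∑ j, p.eval (y j)| ≤ η * N := by
  set C : ℝ := ∑ k ∈ Finset.range (p.natDegree + 1), |p.coeff k| with hC
  have hC0 : 0 ≤ C := Finset.sum_nonneg fun _ _ => abs_nonneg _
  have ht : Tendsto (fun m : ℕ => C * (1 / ((m : ℝ) + 1))) atTop (nhds (C * 0)) :=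
    tendsto_one_div_add_atTop_nhds_zero_nat.const_mul C
  rw [mul_zero] at ht
  filter_upwards [eventually_ge_atTop p.natDegree, ht.eventually (gt_mem_nhds hη)] with m hm hm2
  intro N x y h
  have e : ∀ z : Fin N → ℝ, ∑ j, p.eval (z j)
      = ∑ k ∈ Finset.range (p.natDegree + 1), p.coeff k * ∑ j, z j ^ k := by
    intro z
    simp_rw [Polynomial.eval_eq_sum_range, Finset.mul_sum]
    rw [Finset.sum_comm]
  rw [e, e, ← Finset.sum_sub_distrib]
  calc |∑ k ∈ Finset.range (p.natDegree + 1),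
        (p.coeff k * ∑ j, x j ^ k - p.coeff k * ∑ j, y j ^ k)|
      ≤ ∑ k ∈ Finset.range (p.natDegree + 1),
        |p.coeff k * ∑ j, x j ^ k - p.coeff k * ∑ j, y j ^ k| := Finset.abs_sum_le_sum_abs _ _
    _ ≤ ∑ k ∈ Finset.range (p.natDegree + 1), |p.coeff k| * (N * (1 / ((m : ℝ) + 1))) := by
        refine Finset.sum_le_sum fun k hk => ?_
        rw [← mul_sub, abs_mul]
        refine mul_le_mul_of_nonneg_left ?_ (abs_nonneg _)
        rcases Nat.eq_zero_or_pos k with rfl | hk0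
        · simp; positivity
        · exact h.2.2 k hk0 (by have := Finset.mem_range.1 hk; omega)
    _ = (C * (1 / ((m : ℝ) + 1))) * N := by rw [← Finset.sum_mul]; ring
    _ ≤ η * N := mul_le_mul_of_nonneg_right hm2.le (Nat.cast_nonneg _)

lemma cont_close (R : ℝ) (f : ℝ → ℝ) (hf : Continuous f) (η : ℝ) (hη : 0 < η) :
    ∀ᶠ m : ℕ in atTop, ∀ (N : ℕ) (x y : Fin N → ℝ), MClose R m N x y →
      |∑ j, f (x j) - ∑ j, f (y j)| ≤ η * N := by
  obtain ⟨p, hp⟩ := exists_polynomial_near_of_continuousOn (-R) R f hf.continuousOn (η / 3)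
    (by positivity)
  filter_upwards [poly_close R p (η / 3) (by positivity)] with m hm N x y h
  have h1 := hm N x y h
  have e : ∀ z : Fin N → ℝ, (∀ j, |z j| ≤ R) →
      |∑ j, f (z j) - ∑ j, p.eval (z j)| ≤ η / 3 * N := by
    intro z hz
    rw [← Finset.sum_sub_distrib]
    calc _ ≤ ∑ j, |f (z j) - p.eval (z j)| := Finset.abs_sum_le_sum_abs _ _
      _ ≤ ∑ j : Fin N, η / 3 := by
        refine Finset.sum_le_sum fun j _ => ?_
        rw [abs_sub_comm]
        exact (hp (z j) (abs_le.1 (hz j))).le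
      _ = η / 3 * N := by simp [mul_comm]
  have h2 := e x h.1
  have h3 := e y h.2.1
  rw [abs_le] at *
  constructor <;> linarith [h1.1, h1.2, h2.1, h2.2, h3.1, h3.2]

lemma thresh_close (R a b : ℝ) (hab : a < b) (η : ℝ) (hη : 0 < η) :
    ∀ᶠ m : ℕ in atTop, ∀ (N : ℕ) (x y : Fin N → ℝ), MClose R m N x y →
      Monotone x → Monotone y →
      ((Finset.univ.filter fun j => b ≤ x j ∧ y j ≤ a).card : ℝ) ≤ η * N := by
  have hc : Continuous fun s : ℝ => max 0 (min 1 ((s - a) / (b - a))) := by fun_prop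
  filter_upwards [cont_close R _ hc η hη] with m hm N x y h hx hy
  have h1 := (abs_le.1 (hm N x y h)).2
  set S := Finset.univ.filter fun j => b ≤ x j ∧ y j ≤ a with hS
  rcases S.eq_empty_or_nonempty with hS0 | ⟨j0, hj0⟩
  · rw [hS0]; simp; positivity
  have hba : 0 < b - a := sub_pos.2 hab
  have l1 : ((Finset.univ.filter fun j => b ≤ x j).card : ℝ)
      ≤ ∑ j, max 0 (min 1 ((x j - a) / (b - a))) := by
    rw [Finset.card_filter]; push_cast
    refine Finset.sum_le_sum fun j _ => ?_
    split_ifs with hj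
    · refine le_max_of_le_right (le_min le_rfl ?_)
      rw [le_div_iff₀ hba]; linarith
    · exact le_max_left _ _
  have l2 : ∑ j, max 0 (min 1 ((y j - a) / (b - a)))
      ≤ ((Finset.univ.filter fun j => a < y j).card : ℝ) := by
    rw [Finset.card_filter]; push_cast
    refine Finset.sum_le_sum fun j _ => ?_
    split_ifs with hj
    · exact max_le zero_le_one (min_le_left _ _)
    · refine max_le le_rfl (min_le_of_right_le ?_)
      exact div_nonpos_of_nonpos_of_nonneg (by linarith) hba.le
  have hj0' := (Finset.mem_filter.1 hj0).2
  have hd : Disjoint S (Finset.univ.filter fun j => a < y j) := by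
    rw [Finset.disjoint_left]
    intro j hj hj'
    have := (Finset.mem_filter.1 hj).2
    have := (Finset.mem_filter.1 hj').2
    linarith
  have hsub : S ∪ (Finset.univ.filter fun j => a < y j) ⊆ Finset.univ.filter fun j => b ≤ x j := by
    intro j hj
    rcases Finset.mem_union.1 hj with hj | hj
    · exact Finset.mem_filter.2 ⟨Finset.mem_univ _, (Finset.mem_filter.1 hj).2.1⟩
    · have hj := (Finset.mem_filter.1 hj).2
      refine Finset.mem_filter.2 ⟨Finset.mem_univ _, ?_⟩
      have : j0 ≤ j := by
        by_contra hc
        have := hy (le_of_not_ge hc)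
        linarith
      linarith [hx this]
  have l3 := Finset.card_le_card hsub
  rw [Finset.card_union_of_disjoint hd] at l3
  have l3' : (S.card : ℝ) + ((Finset.univ.filter fun j => a < y j).card : ℝ)
     ≤ ((Finset.univ.filter fun j => b ≤ x j).card : ℝ) := by exact_mod_cast l3
  linarith

lemma grid_pt (R : ℝ) (K : ℕ) (hR : 0 < R) (hK : 0 < K) (s t : ℝ) (hs : |s| ≤ R) (ht : |t| ≤ R) :
    s - t ≤ 2 * (2 * R / K) + ∑ l ∈ Finset.range K,
      2 * R * (if (-R + (l + 1) * (2 * R / K) ≤ s ∧ t ≤ -R + l * (2 * R / K)) then (1 : ℝ) else 0) := by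
  set h := 2 * R / K with hh
  have hK' : (0 : ℝ) < K := by exact_mod_cast hK
  have hh0 : 0 < h := by positivity
  have hKh : K * h = 2 * R := by rw [hh]; field_simp
  have hs' := abs_le.1 hs
  have ht' := abs_le.1 ht
  have hnn : ∀ l ∈ Finset.range K, 0 ≤ 2 * R * (if (-R + (l + 1) * h ≤ s ∧ t ≤ -R + l * h) then (1 : ℝ) else 0) := by
    intro l _; split_ifs <;> simp; linarith
  by_cases hst : s - t ≤ 2 * h
  · linarith [Finset.sum_nonneg hnn]
  push Not at hst
  set l := ⌈(t + R) / h⌉₊ with hl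
  have l1 : (t + R) / h ≤ l := Nat.le_ceil _
  have l2 : (l : ℝ) < (t + R) / h + 1 := Nat.ceil_lt_add_one (div_nonneg (by linarith) hh0.le)
  rw [div_le_iff₀ hh0] at l1
  have l2' : l * h < t + R + h := by
    have := mul_lt_mul_of_pos_right l2 hh0
    rwa [add_mul, div_mul_cancel₀ _ hh0.ne', one_mul] at this
  have hlK : l < K := by
    have : (l : ℝ) * h < K * h := by linarith
    exact_mod_cast lt_of_mul_lt_mul_right this hh0.le
  have := Finset.single_le_sum hnn (Finset.mem_range.2 hlK)
  rw [if_pos ⟨by linarith, by linarith⟩] at this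
  linarith

lemma sorted_close (R : ℝ) (hR : 0 < R) (ε : ℝ) (hε : 0 < ε) :
    ∀ᶠ m : ℕ in atTop, ∀ (N : ℕ) (x y : Fin N → ℝ), MClose R m N x y →
      Monotone x → Monotone y → ∑ j, |x j - y j| ≤ ε * N := by
  obtain ⟨K, hK⟩ := exists_nat_gt (8 * R / ε)
  have hK' : (0 : ℝ) < K := lt_trans (by positivity) hK
  have hK0 : 0 < K := by exact_mod_cast hK'
  set h := 2 * R / K with hh
  have hh0 : 0 < h := by positivity
  have hhε : 2 * h ≤ ε / 2 := by
    rw [div_lt_iff₀ hε] at hK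
    rw [hh, ← mul_div_assoc, div_le_iff₀ hK']; linarith
  set η := ε / (8 * R * K) with hη
  have hη0 : 0 < η := by positivity
  have key : ∀ᶠ m : ℕ in atTop, ∀ l ∈ Finset.range K, ∀ (N : ℕ) (x y : Fin N → ℝ),
      MClose R m N x y → Monotone x → Monotone y →
      ((Finset.univ.filter fun j => -R + ((l : ℝ) + 1) * h ≤ x j ∧ y j ≤ -R + l * h).card : ℝ)
        ≤ η * N := by
    rw [Filter.eventually_all_finset]
    intro l _
    exact thresh_close R _ _ (by nlinarith) η hη0
  filter_upwards [key] with m hm N x y hc hx hy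
  have pt : ∀ j, |x j - y j| ≤ 2 * h + (∑ l ∈ Finset.range K,
      2 * R * (if (-R + ((l : ℝ) + 1) * h ≤ x j ∧ y j ≤ -R + l * h) then (1 : ℝ) else 0)
      + ∑ l ∈ Finset.range K,
      2 * R * (if (-R + ((l : ℝ) + 1) * h ≤ y j ∧ x j ≤ -R + l * h) then (1 : ℝ) else 0)) := by
    intro j
    have a1 := grid_pt R K hR hK0 (x j) (y j) (hc.1 j) (hc.2.1 j)
    have a2 := grid_pt R K hR hK0 (y j) (x j) (hc.2.1 j) (hc.1 j)
    have nn : ∀ s t : ℝ, 0 ≤ ∑ l ∈ Finset.range K,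
      2 * R * (if (-R + ((l : ℝ) + 1) * h ≤ s ∧ t ≤ -R + l * h) then (1 : ℝ) else 0) := by
      intro s t
      refine Finset.sum_nonneg fun l _ => ?_
      split_ifs <;> simp; linarith
    have n1 := nn (x j) (y j)
    have n2 := nn (y j) (x j)
    rw [← hh] at a1 a2
    rw [abs_le]
    constructor <;> linarith
  have cnt : ∀ x y : Fin N → ℝ, MClose R m N x y → Monotone x → Monotone y →
      ∑ j, ∑ l ∈ Finset.range K,
      2 * R * (if (-R + ((l : ℝ) + 1) * h ≤ x j ∧ y j ≤ -R + l * h) then (1 : ℝ) else 0)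
      ≤ ε / 4 * N := by
    intro x y hc hx hy
    rw [Finset.sum_comm]
    calc _ ≤ ∑ l ∈ Finset.range K, 2 * R * (η * N) := by
          refine Finset.sum_le_sum fun l hl => ?_
          rw [← Finset.mul_sum]
          refine mul_le_mul_of_nonneg_left ?_ (by linarith)
          have := hm l hl N x y hc hx hy
          rw [Finset.card_filter] at this
          push_cast at this
          exact this
      _ = ε / 4 * N := by
          rw [Finset.sum_const, Finset.card_range, nsmul_eq_mul, hη]; field_simp; ring
  calc ∑ j, |x j - y j| ≤ _ := Finset.sum_le_sum fun j _ => pt j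
    _ ≤ ε * N := by
      rw [Finset.sum_add_distrib, Finset.sum_add_distrib]
      have c1 := cnt x y hc hx hy
      have c2 := cnt y x hc.symm hy hx
      have c3 : ∑ j : Fin N, 2 * h ≤ ε / 2 * N := by
        simp only [Finset.sum_const, Finset.card_univ, Fintype.card_fin, nsmul_eq_mul]
        rw [mul_comm]
        exact mul_le_mul_of_nonneg_right hhε (Nat.cast_nonneg _)
      linarith

lemma prod_diff (C : ℝ) (hC : 1 ≤ C) : ∀ (k : ℕ) (a b : Fin k → ℝ), (∀ l, |a l| ≤ C) →
    (∀ l, |b l| ≤ C) → |∏ l, a l - ∏ l, b l| ≤ C ^ k * ∑ l, |a l - b l| := by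
  intro k
  induction k with
  | zero => intro a b _ _; simp
  | succ k ih =>
    intro a b ha hb
    rw [Fin.prod_univ_succ, Fin.prod_univ_succ, Fin.sum_univ_succ]
    have i := ih (fun l => a l.succ) (fun l => b l.succ) (fun l => ha _) (fun l => hb _)
    set A := ∏ l : Fin k, a l.succ
    set B := ∏ l : Fin k, b l.succ
    set S := ∑ l : Fin k, |a l.succ - b l.succ|
    have hA : |A| ≤ C ^ k := by
      rw [Finset.abs_prod]
      calc _ ≤ ∏ l : Fin k, C := Finset.prod_le_prod (fun _ _ => abs_nonneg _) fun l _ => ha _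
        _ = C ^ k := by simp
    have hCk : 0 ≤ C ^ k := by positivity
    calc |a 0 * A - b 0 * B| = |(a 0 - b 0) * A + b 0 * (A - B)| := by congr 1; ring
      _ ≤ |a 0 - b 0| * |A| + |b 0| * |A - B| := by
        refine (abs_add_le _ _).trans ?_
        rw [abs_mul, abs_mul]
      _ ≤ |a 0 - b 0| * C ^ k + C * (C ^ k * S) := by
        gcongr
        exact hb 0
      _ ≤ C ^ (k + 1) * (|a 0 - b 0| + S) := by
        have : |a 0 - b 0| * C ^ k ≤ |a 0 - b 0| * C ^ k * C :=
          le_mul_of_one_le_right (by positivity) hC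
        rw [pow_succ]; linarith

lemma memD_iff {Ω : Type*} [MeasurableSpace Ω] (μ : Measure Ω) (X : Ω → ℝ) (R : ℝ) (N m : ℕ)
    (δ : ℝ) (y : Fin N → ℝ) :
    (fun _ : Fin 1 => y) ∈ DeltaR μ (fun _ : Fin 1 => X) R N m δ ↔
      (∀ j, |y j| ≤ R) ∧ ∀ k : ℕ, 1 ≤ k → k ≤ m →
        |(∑ j, y j ^ k) / N - ∫ ω, X ω ^ k ∂μ| < δ := by
  simp only [DeltaR, kappa, Set.mem_ofPred_eq, Finset.prod_const, Finset.card_univ,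
    Fintype.card_fin]
  constructor
  · rintro ⟨h1, h2⟩
    exact ⟨h1 0, fun k hk hkm => h2 k hk hkm (fun _ => 0)⟩
  · rintro ⟨h1, h2⟩
    exact ⟨fun _ => h1, fun k hk hkm _ => h2 k hk hkm⟩

def DMarg {Ω : Type*} [MeasurableSpace Ω] (μ : Measure Ω)
    {n : ℕ} (X : Fin n → Ω → ℝ) (R : ℝ) (N m : ℕ) (δ : ℝ) :
    Set (Fin n → Fin N → ℝ) :=
  {x | ∀ i, (fun _ : Fin 1 => x i) ∈ DeltaR μ (fun _ : Fin 1 => X i) R N m δ}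

def pact {n N : ℕ} (σ : Fin n → Equiv.Perm (Fin N)) (x : Fin n → Fin N → ℝ) :
    Fin n → Fin N → ℝ := fun i j => x i ((σ i)⁻¹ j)

lemma DeltaR_sub_DMarg {Ω : Type*} [MeasurableSpace Ω] (μ : Measure Ω)
    {n : ℕ} (X : Fin n → Ω → ℝ) (R : ℝ) (N m : ℕ) (δ : ℝ) :
    DeltaR μ X R N m δ ⊆ DMarg μ X R N m δ := by
  intro x hx i
  rw [memD_iff]
  refine ⟨hx.1 i, fun k h1 h2 => ?_⟩
  have := hx.2 k h1 h2 (fun _ => i)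
  simpa [kappa] using this

lemma pact_mem_DMarg {Ω : Type*} [MeasurableSpace Ω] (μ : Measure Ω)
    {n : ℕ} (X : Fin n → Ω → ℝ) (R : ℝ) (N m : ℕ) (δ : ℝ)
    (σ : Fin n → Equiv.Perm (Fin N)) (x : Fin n → Fin N → ℝ) :
    pact σ x ∈ DMarg μ X R N m δ ↔ x ∈ DMarg μ X R N m δ := by
  refine forall_congr' fun i => ?_
  rw [memD_iff, memD_iff]
  refine and_congr ?_ ?_
  · constructor
    · intro h j; simpa [pact] using h (σ i j)
    · intro h j; exact h _
  · refine forall_congr' fun k => forall_congr' fun _ => forall_congr' fun _ => ?_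
    have : ∑ j, pact σ x i j ^ k = ∑ j, x i j ^ k :=
      Equiv.sum_comp (σ i)⁻¹ (fun j => x i j ^ k)
    rw [this]

lemma key_inclusion {Ω : Type*} [MeasurableSpace Ω] (μ : Measure Ω)
    {n : ℕ} (X : Fin n → Ω → ℝ) (R : ℝ) (hR : 0 < R) (m : ℕ) (δ : ℝ) (hδ : 0 < δ) :
    ∃ (m' : ℕ) (δ' : ℝ), 0 < δ' ∧ ∀ N : ℕ, 0 < N → ∀ σ ∈ DeltaSymR μ X R N m' δ',
      ∀ y ∈ DMarg μ X R N m' δ', (∀ i, Monotone (y i)) → pact σ y ∈ DeltaR μ X R N m δ := by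
  set C := max 1 R with hC
  have hC1 : 1 ≤ C := le_max_left _ _
  set ε := δ / (2 * C ^ m * (m + 1)) with hε
  have hε0 : 0 < ε := by positivity
  obtain ⟨m', hm', hmm⟩ := ((sorted_close R hR ε hε0).and (eventually_ge_atTop m)).exists
  refine ⟨m', min (δ / 2) (1 / (2 * ((m' : ℝ) + 1))), by positivity, ?_⟩
  set δ' := min (δ / 2) (1 / (2 * ((m' : ℝ) + 1))) with hδ'
  intro N hN σ hσ y hy hymono
  obtain ⟨x, hxmono, hx⟩ := hσ
  have hN' : (0 : ℝ) < N := by exact_mod_cast hN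
  change pact σ x ∈ _ at hx
  have hxD : x ∈ DMarg μ X R N m' δ' := by
    rw [← pact_mem_DMarg μ X R N m' δ' σ]
    exact DeltaR_sub_DMarg μ X R N m' δ' hx
  have hclose : ∀ i, ∑ j, |x i j - y i j| ≤ ε * N := by
    intro i
    refine hm' N _ _ ?_ (hxmono i) (hymono i)
    have a := (memD_iff _ _ _ _ _ _ _).1 (hxD i)
    have b := (memD_iff _ _ _ _ _ _ _).1 (hy i)
    refine ⟨a.1, b.1, fun k h1 h2 => ?_⟩
    have a2 := a.2 k h1 h2
    have b2 := b.2 k h1 h2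
    have c : |(∑ j, x i j ^ k) / N - (∑ j, y i j ^ k) / N| ≤ 1 / ((m' : ℝ) + 1) := by
      have e : 1 / ((m' : ℝ) + 1) = 2 * (1 / (2 * ((m' : ℝ) + 1))) := by field_simp
      have := min_le_right (δ / 2) (1 / (2 * ((m' : ℝ) + 1)))
      rw [abs_lt] at a2 b2
      rw [abs_le, e]
      constructor <;> linarith [a2.1, a2.2, b2.1, b2.2]
    rw [← sub_div, abs_div, abs_of_pos hN', div_le_iff₀ hN'] at c
    linarith
  have hyb : ∀ i j, |y i j| ≤ R := fun i => ((memD_iff _ _ _ _ _ _ _).1 (hy i)).1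
  have hxb : ∀ i j, |x i j| ≤ R := fun i => ((memD_iff _ _ _ _ _ _ _).1 (hxD i)).1
  refine ⟨fun i j => hyb _ _, fun k h1 h2 idx => ?_⟩
  have hx2 := hx.2 k h1 (h2.trans hmm) idx
  have hd : |kappa (fun j => ∏ l, pact σ y (idx l) j) - kappa (fun j => ∏ l, pact σ x (idx l) j)|
      ≤ δ / 2 := by
    unfold kappa
    rw [← sub_div, abs_div, abs_of_pos hN', div_le_iff₀ hN', ← Finset.sum_sub_distrib]
    calc _ ≤ ∑ j, |∏ l, pact σ y (idx l) j - ∏ l, pact σ x (idx l) j| :=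
          Finset.abs_sum_le_sum_abs _ _
      _ ≤ ∑ j, C ^ k * ∑ l, |pact σ y (idx l) j - pact σ x (idx l) j| := by
          refine Finset.sum_le_sum fun j _ => prod_diff C hC1 k _ _ (fun l => ?_) (fun l => ?_)
          · exact (hyb _ _).trans (le_max_right _ _)
          · exact (hxb _ _).trans (le_max_right _ _)
      _ = C ^ k * ∑ l, ∑ j, |pact σ y (idx l) j - pact σ x (idx l) j| := by
          rw [← Finset.mul_sum, Finset.sum_comm]
      _ ≤ C ^ m * ∑ l : Fin k, ε * N := by
          refine mul_le_mul (pow_le_pow_right₀ hC1 h2) (Finset.sum_le_sum fun l _ => ?_)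
            (Finset.sum_nonneg fun _ _ => Finset.sum_nonneg fun _ _ => abs_nonneg _) (by positivity)
          have e := Equiv.sum_comp (σ (idx l))⁻¹ (fun j => |y (idx l) j - x (idx l) j|)
          refine (le_of_eq e).trans ?_
          simp_rw [abs_sub_comm (y _ _)]
          exact hclose _
      _ ≤ C ^ m * ((m + 1) * (ε * N)) := by
          rw [Finset.sum_const, Finset.card_univ, Fintype.card_fin, nsmul_eq_mul]
          have : (k : ℝ) ≤ m + 1 := by
            have : (k : ℝ) ≤ m := by exact_mod_cast h2
            linarith
          gcongr
      _ = δ / 2 * N := by rw [hε]; field_simp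
  have : δ' ≤ δ / 2 := min_le_left _ _
  rw [abs_lt] at *
  rw [abs_le] at hd
  constructor <;> linarith [hd.1, hd.2, hx2.1, hx2.2]

lemma isClosed_mono (n N : ℕ) : IsClosed {x : Fin n → Fin N → ℝ | ∀ i, Monotone (x i)} := by
  simp only [Monotone, Set.ofPred_forall]
  refine isClosed_iInter fun i => isClosed_iInter fun a => isClosed_iInter fun b =>
    isClosed_iInter fun _ => ?_
  exact isClosed_le (by fun_prop) (by fun_prop)

lemma measurableSet_DMarg {Ω : Type*} [MeasurableSpace Ω] (μ : Measure Ω)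
    {n : ℕ} (X : Fin n → Ω → ℝ) (R : ℝ) (N m : ℕ) (δ : ℝ) :
    MeasurableSet (DMarg μ X R N m δ) := by
  simp only [DMarg, memD_iff, Set.ofPred_forall, Set.ofPred_and]
  refine MeasurableSet.iInter fun i => MeasurableSet.inter ?_ ?_
  · refine MeasurableSet.iInter fun j => ?_
    exact measurableSet_le (by fun_prop) (by fun_prop)
  · refine MeasurableSet.iInter fun k => MeasurableSet.iInter fun _ => MeasurableSet.iInter fun _ => ?_
    exact measurableSet_lt (by fun_prop) (by fun_prop)

lemma pact_mp {n N : ℕ} (σ : Fin n → Equiv.Perm (Fin N)) :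
    MeasurePreserving (pact σ) volume volume := by
  refine volume_preserving_pi (f := fun i (a : Fin N → ℝ) j => a ((σ i)⁻¹ j)) fun i => ?_
  have := volume_measurePreserving_piCongrLeft (fun _ : Fin N => ℝ) (σ i)
  convert this using 1
  ext a j
  have := MeasurableEquiv.piCongrLeft_apply_apply (σ i) (β := fun _ : Fin N => ℝ) a ((σ i)⁻¹ j)
  simpa using this.symm

lemma null_eq {n N : ℕ} (i : Fin n) (j k : Fin N) (hjk : j ≠ k) :
    volume {x : Fin n → Fin N → ℝ | x i j = x i k} = 0 := by
  let f : (Fin n → Fin N → ℝ) →ₗ[ℝ] ℝ :=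
    { toFun := fun x => x i j - x i k
      map_add' := by intro x y; simp; ring
      map_smul' := by intro c x; simp; ring }
  have h : LinearMap.ker f ≠ ⊤ := by
    intro h
    have : (fun _ => Pi.single j 1 : Fin n → Fin N → ℝ) ∈ LinearMap.ker f := by rw [h]; trivial
    rw [LinearMap.mem_ker] at this
    simp [f, hjk.symm] at this
  have := Measure.addHaar_submodule volume (LinearMap.ker f) h
  convert this using 2
  ext x
  simp [f, sub_eq_zero]

/-- The piece of `D` sorted by `σ`. -/
def piece {n N : ℕ} (D : Set (Fin n → Fin N → ℝ)) (σ : Fin n → Equiv.Perm (Fin N)) :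
    Set (Fin n → Fin N → ℝ) :=
  {x | x ∈ D ∧ ∀ i, Monotone (fun j => x i (σ i j))}

lemma piece_preimage {n N : ℕ} (D : Set (Fin n → Fin N → ℝ))
    (hinv : ∀ σ x, pact σ x ∈ D ↔ x ∈ D) (σ : Fin n → Equiv.Perm (Fin N)) :
    piece D σ = pact σ⁻¹ ⁻¹' (piece D 1) := by
  ext x
  simp only [piece, Set.mem_preimage, Set.mem_ofPred_eq, hinv]
  simp [pact]

lemma measurableSet_piece {n N : ℕ} (D : Set (Fin n → Fin N → ℝ)) (hD : MeasurableSet D)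
    (hinv : ∀ σ x, pact σ x ∈ D ↔ x ∈ D) (σ : Fin n → Equiv.Perm (Fin N)) :
    MeasurableSet (piece D σ) := by
  rw [piece_preimage D hinv]
  refine (pact_mp _).measurable (hD.inter (isClosed_mono n N).measurableSet)

lemma vol_piece {n N : ℕ} (D : Set (Fin n → Fin N → ℝ)) (hD : MeasurableSet D)
    (hinv : ∀ σ x, pact σ x ∈ D ↔ x ∈ D) (σ : Fin n → Equiv.Perm (Fin N)) :
    volume (piece D σ) = volume (piece D 1) := by
  rw [piece_preimage D hinv]
  exact (pact_mp _).measure_preimage (measurableSet_piece D hD hinv 1).nullMeasurableSet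

lemma piece_aedisj {n N : ℕ} (D : Set (Fin n → Fin N → ℝ)) (σ τ : Fin n → Equiv.Perm (Fin N))
    (h : σ ≠ τ) : AEDisjoint volume (piece D σ) (piece D τ) := by
  have hs : piece D σ ∩ piece D τ ⊆ ⋃ (i : Fin n) (j : Fin N) (k : Fin N) (_ : j ≠ k),
      {x : Fin n → Fin N → ℝ | x i j = x i k} := by
    rintro x ⟨h1, h2⟩
    by_contra hc
    simp only [Set.mem_iUnion, Set.mem_ofPred_eq, not_exists] at hc
    apply h
    funext i
    have e := Tuple.unique_monotone (f := x i) (σ := σ i) (τ := τ i) (h1.2 i) (h2.2 i)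
    ext j
    have := congrFun e j
    simp only [Function.comp] at this
    by_contra hne
    exact hc i _ _ (fun h => hne (by rw [h])) this
  refine measure_mono_null hs ?_
  simp only [measure_iUnion_null_iff]
  exact fun i j k hjk => null_eq i j k hjk

lemma vol_biUnion_piece {n N : ℕ} (D : Set (Fin n → Fin N → ℝ)) (hD : MeasurableSet D)
    (hinv : ∀ σ x, pact σ x ∈ D ↔ x ∈ D) (S : Set (Fin n → Equiv.Perm (Fin N))) :
    volume (⋃ σ ∈ S, piece D σ) = Nat.card S * volume (piece D 1) := by
  have : (⋃ σ ∈ S, piece D σ) = ⋃ σ ∈ S.toFinset, piece D σ := by simp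
  rw [this, measure_biUnion_finset₀]
  · rw [Finset.sum_congr rfl fun σ _ => vol_piece D hD hinv σ]
    simp
  · intro σ _ τ _ h
    exact piece_aedisj D σ τ h
  · intro σ _
    exact (measurableSet_piece D hD hinv σ).nullMeasurableSet

lemma vol_piece_one {n N : ℕ} (D : Set (Fin n → Fin N → ℝ)) (hD : MeasurableSet D)
    (hinv : ∀ σ x, pact σ x ∈ D ↔ x ∈ D) :
    volume D = (N.factorial : ℝ≥0∞) ^ n * volume (piece D 1) := by
  have h := vol_biUnion_piece D hD hinv Set.univ
  have e : (⋃ σ ∈ (Set.univ : Set (Fin n → Equiv.Perm (Fin N))), piece D σ) = D := by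
    ext x
    simp only [Set.mem_univ, Set.iUnion_true, Set.mem_iUnion]
    constructor
    · rintro ⟨σ, h⟩; exact h.1
    · intro h; exact ⟨fun i => Tuple.sort (x i), h, fun i => Tuple.monotone_sort (x i)⟩
  rw [e] at h
  rw [h]
  simp [Nat.card_eq_fintype_card, Fintype.card_perm]

lemma DeltaR_sub {Ω : Type*} [MeasurableSpace Ω] (μ : Measure Ω)
    {n : ℕ} (X : Fin n → Ω → ℝ) (R : ℝ) (N m : ℕ) (δ : ℝ) :
    DeltaR μ X R N m δ ⊆ ⋃ σ ∈ DeltaSymR μ X R N m δ, piece (DMarg μ X R N m δ) σ := by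
  intro x hx
  simp only [Set.mem_iUnion]
  refine ⟨fun i => Tuple.sort (x i), ⟨fun i j => x i (Tuple.sort (x i) j),
    fun i => Tuple.monotone_sort (x i), ?_⟩, DeltaR_sub_DMarg _ _ _ _ _ _ hx,
    fun i => Tuple.monotone_sort (x i)⟩
  simpa using hx

lemma sub_DeltaR {Ω : Type*} [MeasurableSpace Ω] (μ : Measure Ω)
    {n : ℕ} (X : Fin n → Ω → ℝ) (R : ℝ) (hR : 0 < R) (m : ℕ) (δ : ℝ) (hδ : 0 < δ) :
    ∃ (m' : ℕ) (δ' : ℝ), 0 < δ' ∧ ∀ N : ℕ, 0 < N →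
      (⋃ σ ∈ DeltaSymR μ X R N m' δ', piece (DMarg μ X R N m' δ') σ) ⊆ DeltaR μ X R N m δ := by
  obtain ⟨m', δ', h0, h⟩ := key_inclusion μ X R hR m δ hδ
  refine ⟨m', δ', h0, fun N hN x hx => ?_⟩
  simp only [Set.mem_iUnion] at hx
  obtain ⟨σ, hσ, hx⟩ := hx
  have := h N hN σ hσ (pact σ⁻¹ x) ((pact_mem_DMarg _ _ _ _ _ _ _ _).2 hx.1)
    (fun i => by
      have e : pact σ⁻¹ x i = fun j => x i (σ i j) := by funext j; simp [pact]
      rw [e]; exact hx.2 i)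
  have e : pact σ (pact σ⁻¹ x) = x := by funext i j; simp [pact]
  rwa [e] at this

lemma vol_DMarg {Ω : Type*} [MeasurableSpace Ω] (μ : Measure Ω)
    {n : ℕ} (X : Fin n → Ω → ℝ) (R : ℝ) (N m : ℕ) (δ : ℝ) :
    volume (DMarg μ X R N m δ)
      = ∏ i, volume (DeltaR μ (fun _ : Fin 1 => X i) R N m δ) := by
  have : DMarg μ X R N m δ = Set.univ.pi fun i =>
      {y : Fin N → ℝ | (fun _ : Fin 1 => y) ∈ DeltaR μ (fun _ : Fin 1 => X i) R N m δ} := by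
    ext x; simp [DMarg, Set.mem_pi]
  rw [this, volume_pi_pi]
  refine Finset.prod_congr rfl fun i _ => ?_
  have := (volume_preserving_funUnique (Fin 1) (Fin N → ℝ)).symm.measure_preimage_equiv
    (DeltaR μ (fun _ : Fin 1 => X i) R N m δ)
  convert this using 2
  · rfl
  · congr!

lemma exists_sample {Ω : Type*} [MeasurableSpace Ω] (μ : Measure Ω) [IsProbabilityMeasure μ]
    {n : ℕ} (X : Fin n → Ω → ℝ) (hmeas : ∀ i, Measurable (X i)) (R : ℝ)
    (hbdd : ∀ i, ∀ᵐ ω ∂μ, |X i ω| ≤ R) :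
    ∃ s : ℕ → Ω, (∀ i j, |X i (s j)| ≤ R) ∧ ∀ (k : ℕ) (idx : Fin k → Fin n),
      Tendsto (fun N : ℕ => (∑ j ∈ Finset.range N, ∏ l, X (idx l) (s j)) / N) atTop
        (nhds (∫ ω, ∏ l, X (idx l) ω ∂μ)) := by
  let P : Measure (ℕ → Ω) := Measure.infinitePi fun _ => μ
  have ev : ∀ j : ℕ, MeasurePreserving (fun s : ℕ → Ω => s j) P μ := fun j =>
    ⟨by fun_prop, Measure.infinitePi_map_eval _ j⟩
  have h1 : ∀ᵐ s ∂P, ∀ i j, |X i (s j)| ≤ R := by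
    rw [ae_all_iff]; intro i
    rw [ae_all_iff]; intro j
    exact (ev j).quasiMeasurePreserving.ae (hbdd i)
  have h2 : ∀ᵐ s ∂P, ∀ (k : ℕ) (idx : Fin k → Fin n),
      Tendsto (fun N : ℕ => (∑ j ∈ Finset.range N, ∏ l, X (idx l) (s j)) / N) atTop
        (nhds (∫ ω, ∏ l, X (idx l) ω ∂μ)) := by
    rw [ae_all_iff]; intro k
    rw [ae_all_iff]; intro idx
    let f : Ω → ℝ := fun ω => ∏ l, X (idx l) ω
    have hf : Measurable f := Finset.measurable_prod _ fun l _ => hmeas _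
    have hfi : Integrable f μ := by
      refine Integrable.of_bound hf.aestronglyMeasurable (R ^ k) ?_
      have : ∀ᵐ ω ∂μ, ∀ i, |X i ω| ≤ R := ae_all_iff.2 hbdd
      filter_upwards [this] with ω hω
      rw [Real.norm_eq_abs, Finset.abs_prod]
      calc _ ≤ ∏ l : Fin k, R := Finset.prod_le_prod (fun _ _ => abs_nonneg _) fun l _ => hω _
        _ = R ^ k := by simp
    have hind := ProbabilityTheory.iIndepFun_infinitePi (P := fun _ : ℕ => μ)
      (X := fun (_ : ℕ) ω => f ω) (fun _ => hf)
    have mm : ∀ i, Measure.map (fun s : ℕ → Ω => f (s i)) P = Measure.map f μ := by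
      intro i
      have := Measure.map_map (μ := P) hf (ev i).measurable
      rw [(ev i).map_eq] at this
      exact this.symm
    have sl := ProbabilityTheory.strong_law_ae_real (μ := P) (fun j s => f (s j))
      ((ev 0).integrable_comp_of_integrable hfi)
      (fun i j hij => hind.indepFun hij)
      (fun i => ⟨(hf.comp (ev i).measurable).aemeasurable, (hf.comp (ev 0).measurable).aemeasurable, (mm i).trans (mm 0).symm⟩)
    have e : ∫ s, f (s 0) ∂P = ∫ ω, f ω ∂μ := by
      rw [← (ev 0).map_eq, integral_map (ev 0).measurable.aemeasurable hf.aestronglyMeasurable]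
    rw [e] at sl
    exact sl
  obtain ⟨s, a, b⟩ := (h1.and h2).exists
  exact ⟨s, a, b⟩

lemma DeltaR_nonempty {Ω : Type*} [MeasurableSpace Ω] (μ : Measure Ω) [IsProbabilityMeasure μ]
    {n : ℕ} (X : Fin n → Ω → ℝ) (hmeas : ∀ i, Measurable (X i)) (R : ℝ)
    (hbdd : ∀ i, ∀ᵐ ω ∂μ, |X i ω| ≤ R) (m : ℕ) (δ : ℝ) (hδ : 0 < δ) :
    ∀ᶠ N : ℕ in atTop, (DeltaR μ X R N m δ).Nonempty := by
  obtain ⟨s, h1, h2⟩ := exists_sample μ X hmeas R hbdd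
  have : ∀ᶠ N : ℕ in atTop, ∀ k ∈ Finset.range (m + 1), ∀ idx : Fin k → Fin n,
      |(∑ j ∈ Finset.range N, ∏ l, X (idx l) (s j)) / N - ∫ ω, ∏ l, X (idx l) ω ∂μ| < δ := by
    rw [eventually_all_finset]
    intro k _
    rw [eventually_all]
    intro idx
    exact (Metric.tendsto_nhds.1 (h2 k idx)) δ hδ
  filter_upwards [this] with N hN
  refine ⟨fun i j => X i (s j), fun i j => h1 i j, fun k _ hk idx => ?_⟩
  have := hN k (Finset.mem_range.2 (by omega)) idx
  rw [Finset.sum_range] at this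
  exact this

lemma DeltaR_pos {Ω : Type*} [MeasurableSpace Ω] (μ : Measure Ω)
    {n : ℕ} (X : Fin n → Ω → ℝ) (R : ℝ) (hR : 0 < R) (N m : ℕ) (δ : ℝ)
    (hne : (DeltaR μ X R N m δ).Nonempty) : 0 < volume (DeltaR μ X R N m δ) := by
  obtain ⟨x, hx1, hx2⟩ := hne
  let V : Set (Fin n → Fin N → ℝ) := {x | ∀ k ∈ Finset.range (m + 1), ∀ idx : Fin k → Fin n, 1 ≤ k →
      |kappa (fun j => ∏ l, x (idx l) j) - ∫ ω, ∏ l, X (idx l) ω ∂μ| < δ}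
  let B : Set (Fin n → Fin N → ℝ) := {x | ∀ i j, |x i j| < R}
  have hV : IsOpen V := by
    have : V = ⋂ k ∈ Finset.range (m + 1), ⋂ idx : Fin k → Fin n, ⋂ _ : 1 ≤ k,
      {x | |kappa (fun j => ∏ l, x (idx l) j) - ∫ ω, ∏ l, X (idx l) ω ∂μ| < δ} := by
      ext x; simp [V]
    rw [this]
    refine isOpen_biInter_finset fun k _ => isOpen_iInter_of_finite fun idx =>
      isOpen_iInter_of_finite fun _ => ?_
    unfold kappa
    exact isOpen_lt (by fun_prop) (by fun_prop)
  have hB : IsOpen B := by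
    have : B = ⋂ i, ⋂ j, {x | |x i j| < R} := by ext x; simp [B]
    rw [this]
    refine isOpen_iInter_of_finite fun i => isOpen_iInter_of_finite fun j => ?_
    exact isOpen_lt (by fun_prop) (by fun_prop)
  have hsub : B ∩ V ⊆ DeltaR μ X R N m δ := fun y hy =>
    ⟨fun i j => (hy.1 i j).le, fun k h1 h2 idx => hy.2 k (Finset.mem_range.2 (by omega)) idx h1⟩
  refine lt_of_lt_of_le ?_ (measure_mono hsub)
  refine (hB.inter hV).measure_pos volume ?_
  have hxV : x ∈ V := fun k hk idx h1 => hx2 k h1 (by have := Finset.mem_range.1 hk; omega) idx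
  have hc : Tendsto (fun c : ℝ => c • x) (nhdsWithin 1 (Set.Iio 1)) (nhds x) := by
    have : Continuous fun c : ℝ => c • x := by fun_prop
    have := (this.tendsto 1).mono_left (nhdsWithin_le_nhds (s := Set.Iio 1))
    simpa using this
  have e1 := hc.eventually (hV.mem_nhds hxV)
  have e2 : ∀ᶠ c : ℝ in nhdsWithin 1 (Set.Iio 1), 0 < c :=
    (nhdsWithin_le_nhds (s := Set.Iio 1)) (lt_mem_nhds one_pos)
  obtain ⟨c, ⟨hc1, hc2⟩, hc3⟩ := ((e1.and e2).and self_mem_nhdsWithin).exists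
  refine ⟨c • x, fun i j => ?_, hc1⟩
  have hc3 : c < 1 := hc3
  simp only [Pi.smul_apply, smul_eq_mul, abs_mul, abs_of_pos hc2]
  calc c * |x i j| ≤ c * R := mul_le_mul_of_nonneg_left (hx1 i j) hc2.le
    _ < R := by nlinarith

lemma DeltaR_fin {Ω : Type*} [MeasurableSpace Ω] (μ : Measure Ω)
    {n : ℕ} (X : Fin n → Ω → ℝ) (R : ℝ) (N m : ℕ) (δ : ℝ) :
    volume (DeltaR μ X R N m δ) ≤ ENNReal.ofReal (2 * R) ^ (N * n) := by
  have : DeltaR μ X R N m δ ⊆ Set.univ.pi fun _ => Set.univ.pi fun _ => Set.Icc (-R) R := by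
    intro x hx
    simp only [Set.mem_pi]
    exact fun i _ j _ => abs_le.1 (hx.1 i j)
  refine (measure_mono this).trans ?_
  rw [volume_pi_pi]
  simp only [volume_pi_pi, Real.volume_Icc, Finset.prod_const, Finset.card_univ, Fintype.card_fin]
  rw [pow_mul]
  simp [two_mul]

lemma DeltaR_mono {Ω : Type*} [MeasurableSpace Ω] (μ : Measure Ω)
    {n : ℕ} (X : Fin n → Ω → ℝ) (R : ℝ) (N : ℕ) {m m' : ℕ} {δ δ' : ℝ} (hm : m ≤ m') (hδ : δ' ≤ δ) :
    DeltaR μ X R N m' δ' ⊆ DeltaR μ X R N m δ := fun _ hx =>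
  ⟨hx.1, fun k h1 h2 idx => (hx.2 k h1 (h2.trans hm) idx).trans_le hδ⟩

lemma DeltaSymR_mono {Ω : Type*} [MeasurableSpace Ω] (μ : Measure Ω)
    {n : ℕ} (X : Fin n → Ω → ℝ) (R : ℝ) (N : ℕ) {m m' : ℕ} {δ δ' : ℝ} (hm : m ≤ m') (hδ : δ' ≤ δ) :
    DeltaSymR μ X R N m' δ' ⊆ DeltaSymR μ X R N m δ := fun _ ⟨x, h1, h2⟩ =>
  ⟨x, h1, DeltaR_mono μ X R N hm hδ h2⟩

lemma DeltaR_lt_top {Ω : Type*} [MeasurableSpace Ω] (μ : Measure Ω)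
    {n : ℕ} (X : Fin n → Ω → ℝ) (R : ℝ) (N m : ℕ) (δ : ℝ) :
    volume (DeltaR μ X R N m δ) ≠ ⊤ :=
  ne_top_of_le_ne_top (ENNReal.pow_ne_top ENNReal.ofReal_ne_top) (DeltaR_fin μ X R N m δ)

lemma volQ_mono {Ω : Type*} [MeasurableSpace Ω] (μ : Measure Ω)
    {n : ℕ} (X : Fin n → Ω → ℝ) (R : ℝ) (N : ℕ) {m m' : ℕ} {δ δ' : ℝ} (hm : m ≤ m') (hδ : δ' ≤ δ)
    (hpos : 0 < volume (DeltaR μ X R N m' δ')) :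
    volQ μ X R N m' δ' ≤ volQ μ X R N m δ := by
  unfold volQ
  refine div_le_div_of_nonneg_right ?_ (Nat.cast_nonneg _)
  refine Real.log_le_log (ENNReal.toReal_pos hpos.ne' (DeltaR_lt_top _ _ _ _ _ _)) ?_
  exact ENNReal.toReal_mono (DeltaR_lt_top _ _ _ _ _ _) (measure_mono (DeltaR_mono _ _ _ _ hm hδ))

lemma card_pos_of {Ω : Type*} [MeasurableSpace Ω] (μ : Measure Ω)
    {n : ℕ} (X : Fin n → Ω → ℝ) (R : ℝ) (N m : ℕ) (δ : ℝ)
    (hpos : 0 < volume (DeltaR μ X R N m δ)) :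
    0 < Nat.card (DeltaSymR μ X R N m δ) := by
  have hne : (DeltaR μ X R N m δ).Nonempty := nonempty_of_measure_ne_zero hpos.ne'
  obtain ⟨x, hx⟩ := hne
  have := DeltaR_sub μ X R N m δ hx
  simp only [Set.mem_iUnion] at this
  obtain ⟨σ, hσ, -⟩ := this
  have : Nonempty (DeltaSymR μ X R N m δ) := ⟨⟨σ, hσ⟩⟩
  exact Nat.card_pos

lemma symQ_mono {Ω : Type*} [MeasurableSpace Ω] (μ : Measure Ω)
    {n : ℕ} (X : Fin n → Ω → ℝ) (R : ℝ) (N : ℕ) {m m' : ℕ} {δ δ' : ℝ} (hm : m ≤ m') (hδ : δ' ≤ δ)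
    (hpos : 0 < volume (DeltaR μ X R N m' δ')) :
    symQ μ X R N m' δ' ≤ symQ μ X R N m δ := by
  unfold symQ
  refine div_le_div_of_nonneg_right ?_ (Nat.cast_nonneg _)
  have h0 : (0 : ℝ) < Nat.card (DeltaSymR μ X R N m' δ') := by
    exact_mod_cast card_pos_of μ X R N m' δ' hpos
  refine Real.log_le_log (by positivity) ?_
  refine div_le_div_of_nonneg_right ?_ (by positivity)
  exact_mod_cast Nat.card_mono (Set.toFinite _) (DeltaSymR_mono μ X R N hm hδ)

lemma sum_formula {Ω : Type*} [MeasurableSpace Ω] (μ : Measure Ω)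
    {n : ℕ} (X : Fin n → Ω → ℝ) (R : ℝ) (N m : ℕ) (δ : ℝ)
    (hpos : 0 < volume (DeltaR μ X R N m δ)) :
    let U := ⋃ σ ∈ DeltaSymR μ X R N m δ, piece (DMarg μ X R N m δ) σ
    symQ μ X R N m δ + ∑ i, volQ μ (fun _ : Fin 1 => X i) R N m δ
      = Real.log (volume U).toReal / N ∧ 0 < volume U ∧ volume U ≠ ⊤ := by
  intro U
  have hD := measurableSet_DMarg μ X R N m δ
  have hinv := pact_mem_DMarg μ X R N m δ
  have hU : volume U = Nat.card (DeltaSymR μ X R N m δ) * volume (piece (DMarg μ X R N m δ) 1) :=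
    vol_biUnion_piece _ hD hinv _
  have hF := vol_piece_one _ hD hinv
  rw [vol_DMarg] at hF
  set p := volume (piece (DMarg μ X R N m δ) 1) with hp
  have hUpos : 0 < volume U := hpos.trans_le (measure_mono (DeltaR_sub μ X R N m δ))
  have hcpos := card_pos_of μ X R N m δ hpos
  have hp0 : p ≠ 0 := by
    intro h; rw [hU, h] at hUpos; simp at hUpos
  have hpt : p ≠ ⊤ := by
    intro h
    have : ∏ i, volume (DeltaR μ (fun _ : Fin 1 => X i) R N m δ) ≠ ⊤ :=
      ENNReal.prod_ne_top fun i _ => DeltaR_lt_top _ _ _ _ _ _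
    rw [hF, h] at this
    exact this (ENNReal.mul_top (pow_ne_zero _ (by exact_mod_cast N.factorial_ne_zero)))
  refine ⟨?_, hUpos, ?_⟩
  · unfold symQ volQ
    rw [← Finset.sum_div, ← add_div]
    congr 1
    have hpr : 0 < p.toReal := ENNReal.toReal_pos hp0 hpt
    have hcr : (0 : ℝ) < Nat.card (DeltaSymR μ X R N m δ) := by exact_mod_cast hcpos
    have hfr : (0 : ℝ) < (N.factorial : ℝ) ^ n := by positivity
    have hF' : ∏ i, (volume (DeltaR μ (fun _ : Fin 1 => X i) R N m δ)).toReal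
        = (N.factorial : ℝ) ^ n * p.toReal := by
      rw [← ENNReal.toReal_prod, hF]; simp
    have hne : ∀ i ∈ Finset.univ, (volume (DeltaR μ (fun _ : Fin 1 => X i) R N m δ)).toReal ≠ 0 := by
      rw [← Finset.prod_ne_zero_iff, hF']; positivity
    rw [← Real.log_prod hne, hF', hU, Real.log_div hcr.ne' hfr.ne', Real.log_mul hfr.ne' hpr.ne',
      ENNReal.toReal_mul, ENNReal.toReal_natCast, Real.log_mul hcr.ne' hpr.ne']
    ring
  · rw [hU]; exact ENNReal.mul_ne_top (ENNReal.natCast_ne_top _) hpt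

lemma ineqA {Ω : Type*} [MeasurableSpace Ω] (μ : Measure Ω)
    {n : ℕ} (X : Fin n → Ω → ℝ) (R : ℝ) (N m : ℕ) (δ : ℝ)
    (hpos : 0 < volume (DeltaR μ X R N m δ)) :
    volQ μ X R N m δ ≤ symQ μ X R N m δ + ∑ i, volQ μ (fun _ : Fin 1 => X i) R N m δ := by
  obtain ⟨h1, h2, h3⟩ := sum_formula μ X R N m δ hpos
  rw [h1]
  refine div_le_div_of_nonneg_right ?_ (Nat.cast_nonneg _)
  refine Real.log_le_log (ENNReal.toReal_pos hpos.ne' (DeltaR_lt_top _ _ _ _ _ _)) ?_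
  exact ENNReal.toReal_mono h3 (measure_mono (DeltaR_sub μ X R N m δ))

lemma ineqB {Ω : Type*} [MeasurableSpace Ω] (μ : Measure Ω)
    {n : ℕ} (X : Fin n → Ω → ℝ) (R : ℝ) (N m m' : ℕ) (δ δ' : ℝ)
    (hpos : 0 < volume (DeltaR μ X R N m' δ'))
    (hsub : (⋃ σ ∈ DeltaSymR μ X R N m' δ', piece (DMarg μ X R N m' δ') σ) ⊆ DeltaR μ X R N m δ) :
    symQ μ X R N m' δ' + ∑ i, volQ μ (fun _ : Fin 1 => X i) R N m' δ' ≤ volQ μ X R N m δ := by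
  obtain ⟨h1, h2, h3⟩ := sum_formula μ X R N m' δ' hpos
  rw [h1]
  refine div_le_div_of_nonneg_right ?_ (Nat.cast_nonneg _)
  refine Real.log_le_log (ENNReal.toReal_pos h2.ne' h3) ?_
  exact ENNReal.toReal_mono (DeltaR_lt_top _ _ _ _ _ _) (measure_mono hsub)

lemma main_limits {Ω : Type*} [MeasurableSpace Ω] (μ : Measure Ω) [IsProbabilityMeasure μ]
    {n : ℕ} (X : Fin n → Ω → ℝ) (hmeas : ∀ i, Measurable (X i)) (R : ℝ)
    (hbdd : ∀ i, ∀ᵐ ω ∂μ, |X i ω| ≤ R) (hR : 0 < R)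
    (hvol : MicrostateVolumeFormula μ X R)
    (hvoli : ∀ i, MicrostateVolumeFormula μ (fun _ : Fin 1 => X i) R)
    (h : Fin n → ℝ)
    (hh : ∀ i, diffEntropy volume (Measure.map (fun ω (_ : Fin 1) => X i ω) μ) = (h i : EReal)) :
    (⨅ (m : ℕ) (δ : ℝ) (_ : 0 < δ),
      Filter.limsup (fun N : ℕ => ((symQ μ X R N m δ : ℝ) : EReal)) atTop)
      = diffEntropy volume (Measure.map (fun ω (i : Fin n) => X i ω) μ) - ((∑ i, h i : ℝ) : EReal) ∧
    (⨅ (m : ℕ) (δ : ℝ) (_ : 0 < δ),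
      Filter.liminf (fun N : ℕ => ((symQ μ X R N m δ : ℝ) : EReal)) atTop)
      = diffEntropy volume (Measure.map (fun ω (i : Fin n) => X i ω) μ) - ((∑ i, h i : ℝ) : EReal) := by
  set H := diffEntropy volume (Measure.map (fun ω (i : Fin n) => X i ω) μ) with hH
  set a := ⨅ (m : ℕ) (δ : ℝ) (_ : 0 < δ),
      Filter.liminf (fun N : ℕ => ((symQ μ X R N m δ : ℝ) : EReal)) atTop with ha
  set b := ⨅ (m : ℕ) (δ : ℝ) (_ : 0 < δ),
      Filter.limsup (fun N : ℕ => ((symQ μ X R N m δ : ℝ) : EReal)) atTop with hb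
  have hpos : ∀ (m : ℕ) (δ : ℝ), 0 < δ → ∀ᶠ N : ℕ in atTop, 0 < volume (DeltaR μ X R N m δ) := by
    intro m δ hδ
    filter_upwards [DeltaR_nonempty μ X hmeas R hbdd m δ hδ] with N hN
    exact DeltaR_pos μ X R hR N m δ hN
  have hposi : ∀ i (m : ℕ) (δ : ℝ), 0 < δ → ∀ᶠ N : ℕ in atTop,
      0 < volume (DeltaR μ (fun _ : Fin 1 => X i) R N m δ) := by
    intro i m δ hδ
    filter_upwards [DeltaR_nonempty μ (fun _ : Fin 1 => X i) (fun _ => hmeas i) R (fun _ => hbdd i)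
      m δ hδ] with N hN
    exact DeltaR_pos μ _ R hR N m δ hN
  have hab : a ≤ b := by
    refine iInf_mono fun m => iInf_mono fun δ => iInf_mono fun _ => ?_
    exact liminf_le_limsup
  have sum_eps : ∀ ε : ℝ, 0 < ε → 0 < ε / (n + 1) ∧ n * (ε / (n + 1)) ≤ ε := by
    intro ε hε
    refine ⟨by positivity, ?_⟩
    have : (0 : ℝ) < n + 1 := by positivity
    rw [← mul_div_assoc, div_le_iff₀ this]
    nlinarith
  -- upper inequality
  have A : ∀ c : ℝ, (c : EReal) < H → ∀ ε : ℝ, 0 < ε → ((c - ∑ i, h i - ε : ℝ) : EReal) ≤ a := by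
    intro c hc ε hε
    obtain ⟨he0, he⟩ := sum_eps ε hε
    set e := ε / (n + 1)
    have hi : ∀ i, ∃ (m : ℕ) (δ : ℝ), 0 < δ ∧ ∀ᶠ N : ℕ in atTop,
        volQ μ (fun _ : Fin 1 => X i) R N m δ < h i + e := by
      intro i
      have h1 := (hvoli i).1
      have hlt : diffEntropy volume (Measure.map (fun ω (_ : Fin 1) => X i ω) μ)
          < ((h i + e : ℝ) : EReal) := by
        rw [hh i]; exact_mod_cast (by linarith : h i < h i + e)
      rw [h1] at hlt
      simp only [iInf_lt_iff] at hlt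
      obtain ⟨m, δ, hδ, hl⟩ := hlt
      refine ⟨m, δ, hδ, ?_⟩
      filter_upwards [eventually_lt_of_limsup_lt hl] with N hN
      exact_mod_cast hN
    choose M D hD0 hM using hi
    rw [ha]
    refine le_iInf fun m => le_iInf fun δ => le_iInf fun hδ => ?_
    obtain ⟨m', hm'⟩ : ∃ m', m ≤ m' ∧ ∀ i, M i ≤ m' :=
      ⟨m + ∑ i, M i, Nat.le_add_right _ _, fun i =>
        (Finset.single_le_sum (f := M) (fun _ _ => Nat.zero_le _) (Finset.mem_univ i)).trans
          (Nat.le_add_left _ _)⟩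
    obtain ⟨δ', hδ0, hδm, hδi⟩ : ∃ δ' : ℝ, 0 < δ' ∧ δ' ≤ δ ∧ ∀ i, δ' ≤ D i := by
      have e1 : ∀ᶠ d : ℝ in nhdsWithin 0 (Set.Ioi 0), ∀ i, d < D i := by
        rw [eventually_all]
        exact fun i => nhdsWithin_le_nhds (gt_mem_nhds (hD0 i))
      have e2 : ∀ᶠ d : ℝ in nhdsWithin 0 (Set.Ioi 0), d < δ := nhdsWithin_le_nhds (gt_mem_nhds hδ)
      obtain ⟨d, ⟨h1, h2⟩, h3⟩ := ((e1.and e2).and self_mem_nhdsWithin).exists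
      exact ⟨d, h3, h2.le, fun i => (h1 i).le⟩
    have hc' : (c : EReal) < liminf (fun N : ℕ => ((volQ μ X R N m' δ' : ℝ) : EReal)) atTop := by
      refine hc.trans_le ?_
      rw [hH, hvol.2]
      exact iInf_le_of_le m' (iInf_le_of_le δ' (iInf_le_of_le hδ0 le_rfl))
    refine le_liminf_of_le (by isBoundedDefault) ?_
    have hMall : ∀ᶠ N : ℕ in atTop, ∀ i, volQ μ (fun _ : Fin 1 => X i) R N (M i) (D i) < h i + e :=
      eventually_all.2 hM
    have hpall : ∀ᶠ N : ℕ in atTop, ∀ i, 0 < volume (DeltaR μ (fun _ : Fin 1 => X i) R N m' δ') :=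
      eventually_all.2 fun i => hposi i m' δ' hδ0
    filter_upwards [eventually_lt_of_lt_liminf hc', hMall, hpall, hpos m' δ' hδ0] with N h1 h2 h3 h4
    have h1 : c < volQ μ X R N m' δ' := by exact_mod_cast h1
    have h5 := ineqA μ X R N m' δ' h4
    have h6 := symQ_mono μ X R N hm'.1 hδm h4
    have h7 : ∑ i, volQ μ (fun _ : Fin 1 => X i) R N m' δ' ≤ ∑ i, (h i + e) :=
      Finset.sum_le_sum fun i _ => (volQ_mono μ _ R N (hm'.2 i) (hδi i) (h3 i)).trans (h2 i).le
    rw [Finset.sum_add_distrib, Finset.sum_const, Finset.card_univ, Fintype.card_fin,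
      nsmul_eq_mul] at h7
    exact_mod_cast (by linarith : c - ∑ i, h i - ε ≤ symQ μ X R N m δ)
  have B : ∀ c : ℝ, (c : EReal) < b → ∀ ε : ℝ, 0 < ε → ((c + ∑ i, h i - ε : ℝ) : EReal) ≤ H := by
    intro c hc ε hε
    obtain ⟨he0, he⟩ := sum_eps ε hε
    set e := ε / (n + 1)
    rw [hH, hvol.1]
    refine le_iInf fun m => le_iInf fun δ => le_iInf fun hδ => ?_
    obtain ⟨m', δ', hδ', hsub⟩ := sub_DeltaR μ X R hR m δ hδ
    have hc' : (c : EReal) < limsup (fun N : ℕ => ((symQ μ X R N m' δ' : ℝ) : EReal)) atTop :=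
      hc.trans_le (iInf_le_of_le m' (iInf_le_of_le δ' (iInf_le_of_le hδ' le_rfl)))
    have hall : ∀ᶠ N : ℕ in atTop, ∀ i, h i - e < volQ μ (fun _ : Fin 1 => X i) R N m' δ' := by
      rw [eventually_all]
      intro i
      have hlt : ((h i - e : ℝ) : EReal) < diffEntropy volume
          (Measure.map (fun ω (_ : Fin 1) => X i ω) μ) := by
        rw [hh i]; exact_mod_cast (by linarith : h i - e < h i)
      have h2 := (hvoli i).2
      rw [h2] at hlt
      have := hlt.trans_le (iInf_le_of_le m' (iInf_le_of_le δ' (iInf_le_of_le hδ' le_rfl)))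
      filter_upwards [eventually_lt_of_lt_liminf this] with N hN
      exact_mod_cast hN
    have hf := frequently_lt_of_lt_limsup (by isBoundedDefault) hc'
    refine le_limsup_of_frequently_le ?_ (by isBoundedDefault)
    refine (hf.and_eventually (hall.and ((hpos m' δ' hδ').and (eventually_gt_atTop 0)))).mono ?_
    rintro N ⟨h1, h2, h3, h4⟩
    have h1 : c < symQ μ X R N m' δ' := by exact_mod_cast h1
    have h5 := ineqB μ X R N m m' δ δ' h3 (hsub N h4)
    have h7 : ∑ i, (h i - e) ≤ ∑ i, volQ μ (fun _ : Fin 1 => X i) R N m' δ' :=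
      Finset.sum_le_sum fun i _ => (h2 i).le
    rw [Finset.sum_sub_distrib, Finset.sum_const, Finset.card_univ, Fintype.card_fin,
      nsmul_eq_mul] at h7
    exact_mod_cast (by linarith : c + ∑ i, h i - ε ≤ volQ μ X R N m δ)
  set S := ∑ i, h i with hS
  have A' : H - (S : EReal) ≤ a := by
    by_contra hcon
    push Not at hcon
    obtain ⟨z, hz1, hz2⟩ := EReal.lt_iff_exists_real_btwn.1 hcon
    obtain ⟨w, hw1, hw2⟩ := EReal.lt_iff_exists_real_btwn.1 hz2
    have hzw : z < w := by exact_mod_cast hw1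
    have h1 : ((w + S : ℝ) : EReal) < H := by
      have := EReal.add_lt_of_lt_sub hw2
      exact_mod_cast this
    have h2 := A _ h1 (w - z) (by linarith)
    rw [show w + S - S - (w - z) = z by ring] at h2
    exact absurd hz1 (not_lt.2 h2)
  have B' : b ≤ H - (S : EReal) := by
    by_contra hcon
    push Not at hcon
    obtain ⟨z, hz1, hz2⟩ := EReal.lt_iff_exists_real_btwn.1 hcon
    obtain ⟨w, hw1, hw2⟩ := EReal.lt_iff_exists_real_btwn.1 hz2
    have hzw : z < w := by exact_mod_cast hw1
    have h2 := B _ hw2 (w - z) (by linarith)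
    rw [show w + S - (w - z) = z + S by ring] at h2
    have h3 : (z : EReal) ≤ H - S := by
      rw [EReal.le_sub_iff_add_le (by simp) (by simp)]
      exact_mod_cast h2
    exact absurd hz1 (not_lt.2 h3)
  exact ⟨le_antisymm B' (A'.trans hab), le_antisymm (hab.trans B') A'⟩

lemma lint_pi_prod {n : ℕ} (f : Fin n → ℝ → ℝ≥0∞) (hf : ∀ i, Measurable (f i)) (ν : Fin n → Measure ℝ)
    [∀ i, SigmaFinite (ν i)] :
    ∫⁻ x : Fin n → ℝ, ∏ i, f i (x i) ∂(Measure.pi ν) = ∏ i, ∫⁻ x, f i x ∂(ν i) := by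
  induction n with
  | zero => simp
  | succ n ih =>
    rw [← ((measurePreserving_piFinSuccAbove ν 0).symm).lintegral_comp_emb
      (MeasurableEquiv.measurableEmbedding _)]
    simp_rw [MeasurableEquiv.piFinSuccAbove_symm_apply, Fin.insertNthEquiv,
            Fin.prod_univ_succ, Fin.insertNth_zero, Equiv.coe_fn_mk, Fin.cons_succ,
            Fin.zero_succAbove, cast_eq, Fin.cons_zero]
    rw [← ih (fun i => f i.succ) (fun i => hf _) (fun i => ν i.succ)]
    exact lintegral_prod_mul (hf 0).aemeasurable
      (Finset.measurable_fun_prod _ (fun (i : Fin n) _ => (hf i.succ).comp (measurable_pi_apply i))).aemeasurable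

lemma pi_eq_withDensity {n : ℕ} (ν : Fin n → Measure ℝ) [∀ i, IsProbabilityMeasure (ν i)]
    (hν : ∀ i, ν i ≪ volume) :
    Measure.pi ν = (volume : Measure (Fin n → ℝ)).withDensity
      (fun x => ∏ i, (ν i).rnDeriv volume (x i)) := by
  refine (Measure.pi_eq (fun s hs => ?_))
  rw [withDensity_apply _ (MeasurableSet.univ_pi hs), ← lintegral_indicator (MeasurableSet.univ_pi hs)]
  have : ∀ x : Fin n → ℝ, (Set.univ.pi s).indicator (fun x => ∏ i, (ν i).rnDeriv volume (x i)) x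
      = ∏ i, (s i).indicator ((ν i).rnDeriv volume) (x i) := by
    intro x
    by_cases hx : x ∈ Set.univ.pi s
    · rw [Set.indicator_of_mem hx]
      refine Finset.prod_congr rfl (fun i _ => ?_)
      rw [Set.indicator_of_mem (hx i trivial)]
    · rw [Set.indicator_of_notMem hx]
      simp only [Set.mem_pi, Set.mem_univ, true_imp_iff, not_forall] at hx
      obtain ⟨i, hi⟩ := hx
      symm
      refine Finset.prod_eq_zero (Finset.mem_univ i) (Set.indicator_of_notMem hi _)
  simp_rw [this]
  rw [volume_pi, lint_pi_prod _ (fun i => (Measure.measurable_rnDeriv _ _).indicator (hs i))]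
  refine Finset.prod_congr rfl (fun i _ => ?_)
  rw [lintegral_indicator (hs i), Measure.setLIntegral_rnDeriv (hν i)]

lemma lint_neg_part {E : Type*} [MeasurableSpace E] (vol P : Measure E) [SigmaFinite vol]
    [IsProbabilityMeasure P] (h : P ≪ vol) :
    (∫⁻ x, ENNReal.ofReal (-(Real.negMulLog (P.rnDeriv vol x).toReal)) ∂vol)
      = ∫⁻ x, ENNReal.ofReal (Real.log (P.rnDeriv vol x).toReal) ∂P := by
  rw [← lintegral_rnDeriv_mul h (by fun_prop)]
  refine lintegral_congr_ae ?_
  filter_upwards [Measure.rnDeriv_ne_top P vol] with x hx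
  rw [Real.negMulLog, neg_mul, neg_neg, ENNReal.ofReal_mul ENNReal.toReal_nonneg,
    ENNReal.ofReal_toReal hx]

lemma lint_pos_part {E : Type*} [MeasurableSpace E] (vol P : Measure E) [SigmaFinite vol]
    [IsProbabilityMeasure P] (h : P ≪ vol) :
    (∫⁻ x, ENNReal.ofReal ((Real.negMulLog (P.rnDeriv vol x).toReal)) ∂vol)
      = ∫⁻ x, ENNReal.ofReal (-Real.log (P.rnDeriv vol x).toReal) ∂P := by
  rw [← lintegral_rnDeriv_mul h (by fun_prop)]
  refine lintegral_congr_ae ?_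
  filter_upwards [Measure.rnDeriv_ne_top P vol] with x hx
  rw [Real.negMulLog, neg_mul, ← mul_neg, ENNReal.ofReal_mul ENNReal.toReal_nonneg,
    ENNReal.ofReal_toReal hx]

lemma lint_pos_fin {E : Type*} [MeasurableSpace E] (vol P : Measure E) [SigmaFinite vol]
    [IsProbabilityMeasure P] (h : P ≪ vol) (S : Set E) (hS : MeasurableSet S) (hvS : vol S ≠ ⊤)
    (hP : P Sᶜ = 0) :
    ∫⁻ x, ENNReal.ofReal (-Real.log (P.rnDeriv vol x).toReal) ∂P ≠ ⊤ := by
  rw [← lint_pos_part vol P h]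
  have h0 : ∀ᵐ x ∂vol, x ∈ Sᶜ → P.rnDeriv vol x = 0 := by
    have := Measure.setLIntegral_rnDeriv h Sᶜ
    rw [hP, setLIntegral_eq_zero_iff hS.compl (Measure.measurable_rnDeriv _ _)] at this
    exact this
  have : ∫⁻ x, ENNReal.ofReal ((Real.negMulLog (P.rnDeriv vol x).toReal)) ∂vol
      ≤ ∫⁻ x, S.indicator 1 x ∂vol := by
    refine lintegral_mono_ae ?_
    filter_upwards [h0] with x hx
    by_cases hxS : x ∈ S
    · rw [Set.indicator_of_mem hxS]
      simp only [Pi.one_apply, ENNReal.ofReal_le_one]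
      have := Real.one_sub_inv_le_log_of_pos (x := (P.rnDeriv vol x).toReal)
      rcases (ENNReal.toReal_nonneg (a := P.rnDeriv vol x)).eq_or_lt with h | h
      · rw [← h]; simp
      · have h2 := this h
        have h3 := mul_le_mul_of_nonneg_left h2 h.le
        rw [mul_sub, mul_inv_cancel₀ h.ne'] at h3
        rw [Real.negMulLog]; linarith
    · rw [hx hxS]; simp
  refine ne_top_of_le_ne_top ?_ this
  rw [lintegral_indicator_one hS]; exact hvS

lemma EReal_real_aux (a b : ℝ≥0∞) (ha : a ≠ ⊤) (hb : b ≠ ⊤) :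
    ((a : EReal) - (b : EReal)) = ((a.toReal - b.toReal : ℝ) : EReal) := by
  rw [EReal.coe_sub, EReal.coe_ennreal_toReal ha, EReal.coe_ennreal_toReal hb]

lemma integrable_of_parts {E : Type*} [MeasurableSpace E] (P : Measure E) (f : E → ℝ)
    (hf : Measurable f) (h1 : ∫⁻ x, ENNReal.ofReal (f x) ∂P ≠ ⊤)
    (h2 : ∫⁻ x, ENNReal.ofReal (-f x) ∂P ≠ ⊤) : Integrable f P := by
  refine ⟨hf.aestronglyMeasurable, ?_⟩
  rw [hasFiniteIntegral_iff_norm]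
  have : ∀ x, ENNReal.ofReal ‖f x‖ = ENNReal.ofReal (f x) + ENNReal.ofReal (-f x) := by
    intro x
    rcases le_total 0 (f x) with h | h
    · rw [Real.norm_of_nonneg h, ENNReal.ofReal_of_nonpos (p := -f x) (by linarith), add_zero]
    · rw [Real.norm_of_nonpos h, ENNReal.ofReal_of_nonpos (p := f x) (by linarith), zero_add]
  simp_rw [this]
  rw [lintegral_add_left hf.ennreal_ofReal]
  exact ENNReal.add_lt_top.2 ⟨h1.lt_top, h2.lt_top⟩

lemma parts_ne_top {E : Type*} [MeasurableSpace E] (P : Measure E) (f : E → ℝ)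
    (hf : Integrable f P) : ∫⁻ x, ENNReal.ofReal (f x) ∂P ≠ ⊤ := by
  refine ne_top_of_le_ne_top hf.2.ne (lintegral_mono fun x => ?_)
  rw [← ofReal_norm]
  exact ENNReal.ofReal_le_ofReal (le_abs_self _)

lemma parts_eq_integral {E : Type*} [MeasurableSpace E] (P : Measure E) (f : E → ℝ)
    (hf : Integrable f P) :
    ((∫⁻ x, ENNReal.ofReal (f x) ∂P : ℝ≥0∞) : EReal) - ((∫⁻ x, ENNReal.ofReal (-f x) ∂P : ℝ≥0∞) : EReal)
      = ((∫ x, f x ∂P : ℝ) : EReal) := by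
  rw [EReal_real_aux _ _ (parts_ne_top P f hf) (parts_ne_top P (fun x => -f x) hf.neg),
    integral_eq_lintegral_pos_part_sub_lintegral_neg_part hf]

lemma parts_sub {E : Type*} [MeasurableSpace E] (P : Measure E) (f g : E → ℝ)
    (hf : Measurable f) (hgm : Measurable g) (hg : Integrable g P)
    (h2 : ∫⁻ x, ENNReal.ofReal (-f x) ∂P ≠ ⊤) :
    ((∫⁻ x, ENNReal.ofReal (f x - g x) ∂P : ℝ≥0∞) : EReal)
      - ((∫⁻ x, ENNReal.ofReal (-(f x - g x)) ∂P : ℝ≥0∞) : EReal)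
    = (((∫⁻ x, ENNReal.ofReal (f x) ∂P : ℝ≥0∞) : EReal)
      - ((∫⁻ x, ENNReal.ofReal (-f x) ∂P : ℝ≥0∞) : EReal)) - ((∫ x, g x ∂P : ℝ) : EReal) := by
  by_cases h1 : ∫⁻ x, ENNReal.ofReal (f x) ∂P = ⊤
  · have h3 : ∫⁻ x, ENNReal.ofReal (f x - g x) ∂P = ⊤ := by
      by_contra h
      have : ∫⁻ x, ENNReal.ofReal (f x) ∂P ≤ ∫⁻ x, ENNReal.ofReal (f x - g x) ∂P
          + ∫⁻ x, ENNReal.ofReal (g x) ∂P := by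
        rw [← lintegral_add_left (f := fun x => ENNReal.ofReal (f x - g x)) (hf.sub hgm).ennreal_ofReal]
        refine lintegral_mono fun x => ?_
        refine le_trans (le_of_eq ?_) ENNReal.ofReal_add_le
        simp
      rw [h1, top_le_iff, ENNReal.add_eq_top] at this
      exact this.elim h (parts_ne_top P g hg)
    have h4 : ∫⁻ x, ENNReal.ofReal (-(f x - g x)) ∂P ≠ ⊤ := by
      have : ∫⁻ x, ENNReal.ofReal (-(f x - g x)) ∂P ≤ ∫⁻ x, ENNReal.ofReal (- f x) ∂P
          + ∫⁻ x, ENNReal.ofReal (g x) ∂P := by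
        rw [← lintegral_add_left (f := fun x => ENNReal.ofReal (-f x)) hf.neg.ennreal_ofReal]
        refine lintegral_mono fun x => ?_
        refine le_trans (le_of_eq ?_) ENNReal.ofReal_add_le
        congr 1; simp; ring
      exact ne_top_of_le_ne_top (ENNReal.add_ne_top.2 ⟨h2, parts_ne_top P g hg⟩) this
    rw [h1, h3]
    rw [← EReal.coe_ennreal_toReal h4, ← EReal.coe_ennreal_toReal h2]
    rw [EReal.coe_ennreal_top, EReal.top_sub_coe, EReal.top_sub_coe, EReal.top_sub_coe]
  · have hfi := integrable_of_parts P f hf h1 h2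
    rw [parts_eq_integral P f hfi, parts_eq_integral P (fun x => f x - g x) (hfi.sub hg),
      integral_sub hfi hg, EReal.coe_sub]

lemma relEntropy_zero_iff {E : Type*} [MeasurableSpace E] (P ν : Measure E)
    [IsProbabilityMeasure P] [IsProbabilityMeasure ν] : relEntropy P ν = 0 ↔ P = ν := by
  constructor
  · intro h
    unfold relEntropy at h
    split_ifs at h with hac
    · have hm : Measurable (fun x => Real.log (P.rnDeriv ν x).toReal) := by fun_prop
      set A := ∫⁻ x, ENNReal.ofReal (Real.log (P.rnDeriv ν x).toReal) ∂P with hA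
      set B := ∫⁻ x, ENNReal.ofReal (-(Real.log (P.rnDeriv ν x).toReal)) ∂P with hB
      have hBt : B ≠ ⊤ := by
        intro hb; rw [hb] at h; simp at h
      have hAt : A ≠ ⊤ := by
        intro ha; rw [ha, ← EReal.coe_ennreal_toReal hBt] at h; simp at h
      have hi := integrable_of_parts P _ hm hAt hBt
      have h0 := parts_eq_integral P _ hi
      rw [h] at h0
      have h1 : ∫ x, Real.log (P.rnDeriv ν x).toReal ∂P = 0 := by exact_mod_cast h0.symm
      rw [← InformationTheory.klDiv_eq_zero_iff,
        InformationTheory.klDiv_of_ac_of_integrable hac hi]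
      have : ∫ x, llr P ν x ∂P = 0 := h1
      simp [this]
    · simp at h
  · rintro rfl
    have : (fun x => Real.log (P.rnDeriv P x).toReal) =ᵐ[P] fun _ => 0 := by
      filter_upwards [Measure.rnDeriv_self P] with x hx
      simp [hx]
    unfold relEntropy
    rw [if_pos (Measure.AbsolutelyContinuous.refl P)]
    have h1 : ∫⁻ x, ENNReal.ofReal (Real.log (P.rnDeriv P x).toReal) ∂P = 0 := by
      rw [lintegral_congr_ae (g := fun _ => 0)]
      · simp
      · filter_upwards [this] with x hx
        rw [hx]; simp
    have h2 : ∫⁻ x, ENNReal.ofReal (-Real.log (P.rnDeriv P x).toReal) ∂P = 0 := by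
      rw [lintegral_congr_ae (g := fun _ => 0)]
      · simp
      · filter_upwards [this] with x hx
        rw [hx]; simp
    rw [h1, h2]; simp

lemma diffEntropy_eq {E : Type*} [MeasurableSpace E] (vol P : Measure E) [SigmaFinite vol]
    [IsProbabilityMeasure P] (h : P ≪ vol) :
    diffEntropy vol P = ((∫⁻ x, ENNReal.ofReal (-Real.log (P.rnDeriv vol x).toReal) ∂P : ℝ≥0∞) : EReal)
      - ((∫⁻ x, ENNReal.ofReal (Real.log (P.rnDeriv vol x).toReal) ∂P : ℝ≥0∞) : EReal) := by
  unfold diffEntropy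
  rw [if_pos h, lint_neg_part vol P h, lint_pos_part vol P h]

lemma finite_entropy {E : Type*} [MeasurableSpace E] (vol P : Measure E) [SigmaFinite vol]
    [IsProbabilityMeasure P] (S : Set E) (hS : MeasurableSet S) (hvS : vol S ≠ ⊤)
    (hP : P Sᶜ = 0) (hfin : diffEntropy vol P ≠ ⊥) :
    P ≪ vol ∧ Integrable (fun x => Real.log (P.rnDeriv vol x).toReal) P ∧
      diffEntropy vol P = ((-∫ x, Real.log (P.rnDeriv vol x).toReal ∂P : ℝ) : EReal) := by
  have hac : P ≪ vol := by
    by_contra h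
    apply hfin
    unfold diffEntropy
    rw [if_neg h]
  have hA := lint_pos_fin vol P hac S hS hvS hP
  rw [diffEntropy_eq vol P hac] at hfin ⊢
  have hB : ∫⁻ x, ENNReal.ofReal (Real.log (P.rnDeriv vol x).toReal) ∂P ≠ ⊤ := by
    intro h
    apply hfin
    rw [h]; simp
  have hi := integrable_of_parts P (fun x => Real.log (P.rnDeriv vol x).toReal) (by fun_prop) hB hA
  refine ⟨hac, hi, ?_⟩
  have := parts_eq_integral P (fun x => -Real.log (P.rnDeriv vol x).toReal) hi.neg
  simp only [neg_neg] at this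
  rw [this, integral_neg]

lemma rel_identity {n : ℕ} (P : Measure (Fin n → ℝ)) [IsProbabilityMeasure P]
    (ν : Fin n → Measure ℝ) [∀ i, IsProbabilityMeasure (ν i)]
    (hmarg : ∀ i, P.map (fun x => x i) = ν i) (hν : ∀ i, ν i ≪ volume)
    (hint : ∀ i, Integrable (fun x => Real.log ((ν i).rnDeriv volume x).toReal) (ν i))
    (S : Set (Fin n → ℝ)) (hS : MeasurableSet S) (hvS : volume S ≠ ⊤) (hP : P Sᶜ = 0) :
    relEntropy P (Measure.pi ν) = -(diffEntropy volume P
      - ((∑ i, (-∫ x, Real.log ((ν i).rnDeriv volume x).toReal ∂(ν i)) : ℝ) : EReal)) := by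
  have hwd := pi_eq_withDensity ν hν
  set q : (Fin n → ℝ) → ℝ≥0∞ := fun x => ∏ i, (ν i).rnDeriv volume (x i) with hq
  have hqm : Measurable q := Finset.measurable_fun_prod _
    (fun i _ => (Measure.measurable_rnDeriv _ _).comp (measurable_pi_apply i))
  have hpv : Measure.pi ν ≪ volume := by
    rw [hwd]; exact withDensity_absolutelyContinuous _ _
  by_cases hac : P ≪ volume
  swap
  · unfold relEntropy diffEntropy
    rw [if_neg (fun h => hac (h.trans hpv)), if_neg hac]
    simp
  -- P-a.e. the marginal densities are positive and finite
  have hpos : ∀ᵐ x ∂P, ∀ i, 0 < (ν i).rnDeriv volume (x i) ∧ (ν i).rnDeriv volume (x i) ≠ ⊤ := by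
    rw [ae_all_iff]
    intro i
    have : ∀ᵐ y ∂(P.map (fun x => x i)), 0 < (ν i).rnDeriv volume y ∧ (ν i).rnDeriv volume y ≠ ⊤ := by
      rw [hmarg i]
      filter_upwards [Measure.rnDeriv_pos (hν i), (hν i).ae_le (Measure.rnDeriv_ne_top (ν i) volume)]
        with y h1 h2 using ⟨h1, h2⟩
    exact ae_of_ae_map (measurable_pi_apply i).aemeasurable this
  have hqpos : ∀ᵐ x ∂P, q x ≠ 0 := by
    filter_upwards [hpos] with x hx
    exact Finset.prod_ne_zero_iff.2 (fun i _ => (hx i).1.ne')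
  have hPν : P ≪ Measure.pi ν := by
    refine Measure.AbsolutelyContinuous.mk (fun s hs h0 => ?_)
    rw [hwd, withDensity_apply _ hs, setLIntegral_eq_zero_iff hs hqm] at h0
    have h1 : ∀ᵐ x ∂P, x ∈ s → q x = 0 := hac.ae_le h0
    refine measure_eq_zero_iff_ae_notMem.2 ?_
    filter_upwards [h1, hqpos] with x h2 h3 h4 using h3 (h2 h4)
  have hrn : (Measure.pi ν).rnDeriv volume =ᵐ[volume] q := by
    rw [hwd]; exact Measure.rnDeriv_withDensity _ hqm
  set f : (Fin n → ℝ) → ℝ := fun x => Real.log (P.rnDeriv volume x).toReal with hf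
  set g : (Fin n → ℝ) → ℝ := fun x => ∑ i, Real.log ((ν i).rnDeriv volume (x i)).toReal with hg
  have hgm : Measurable g := Finset.measurable_fun_sum _
    (fun i _ => (by fun_prop : Measurable (fun y => Real.log ((ν i).rnDeriv volume y).toReal)).comp
      (measurable_pi_apply i))
  have hmp : ∀ i, MeasurePreserving (fun x : Fin n → ℝ => x i) P (ν i) :=
    fun i => ⟨measurable_pi_apply i, hmarg i⟩
  have hgi : ∀ i, Integrable (fun x : Fin n → ℝ => Real.log ((ν i).rnDeriv volume (x i)).toReal) P :=
    fun i => (hmp i).integrable_comp_of_integrable (hint i)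
  have hgI : Integrable g P := integrable_finset_sum _ (fun i _ => hgi i)
  have hgint : ∫ x, g x ∂P = ∑ i, ∫ x, Real.log ((ν i).rnDeriv volume x).toReal ∂(ν i) := by
    rw [integral_finset_sum _ (fun i _ => hgi i)]
    refine Finset.sum_congr rfl (fun i _ => ?_)
    rw [← hmarg i, integral_map (measurable_pi_apply i).aemeasurable
      (by fun_prop : Measurable _).aestronglyMeasurable]
  have hlog : ∀ᵐ x ∂P, Real.log (P.rnDeriv (Measure.pi ν) x).toReal = f x - g x := by
    filter_upwards [hPν.ae_le (Measure.rnDeriv_eq_div (ξ := volume) hac hpv), hac.ae_le hrn, hpos, hqpos,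
      Measure.rnDeriv_pos hac, hac.ae_le (Measure.rnDeriv_ne_top P volume)] with x h1 h2 h3 h4 h5 h6
    rw [h1, h2, ENNReal.toReal_div, Real.log_div, hq]
    · simp only [hf, hg]
      rw [ENNReal.toReal_prod, Real.log_prod]
      intro i _
      exact ENNReal.toReal_ne_zero.2 ⟨(h3 i).1.ne', (h3 i).2⟩
    · exact ENNReal.toReal_ne_zero.2 ⟨h5.ne', h6⟩
    · exact ENNReal.toReal_ne_zero.2 ⟨h4, ENNReal.prod_ne_top (fun i _ => (h3 i).2)⟩
  have hA := lint_pos_fin volume P hac S hS hvS hP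
  have hkey := parts_sub P f g (by fun_prop) hgm hgI hA
  unfold relEntropy
  rw [if_pos hPν]
  have e1 : ∫⁻ x, ENNReal.ofReal (Real.log (P.rnDeriv (Measure.pi ν) x).toReal) ∂P
      = ∫⁻ x, ENNReal.ofReal (f x - g x) ∂P :=
    lintegral_congr_ae (by filter_upwards [hlog] with x hx; rw [hx])
  have e2 : ∫⁻ x, ENNReal.ofReal (-Real.log (P.rnDeriv (Measure.pi ν) x).toReal) ∂P
      = ∫⁻ x, ENNReal.ofReal (-(f x - g x)) ∂P :=
    lintegral_congr_ae (by filter_upwards [hlog] with x hx; rw [hx])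
  rw [e1, e2, hkey, hgint, diffEntropy_eq volume P hac]
  rw [Finset.sum_neg_distrib]
  set a := ∫⁻ x, ENNReal.ofReal (-Real.log (P.rnDeriv volume x).toReal) ∂P
  set b := ∫⁻ x, ENNReal.ofReal (Real.log (P.rnDeriv volume x).toReal) ∂P
  set c := ∑ i, ∫ x, Real.log ((ν i).rnDeriv volume x).toReal ∂(ν i)
  change (b : EReal) - (a : EReal) - (c : EReal) = -((a : EReal) - (b : EReal) - ((-c : ℝ) : EReal))
  rw [← EReal.coe_ennreal_toReal hA]
  by_cases hb : b = ⊤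
  · rw [hb, EReal.coe_ennreal_top, EReal.top_sub_coe, EReal.top_sub_coe]
    simp
  · rw [← EReal.coe_ennreal_toReal hb]
    norm_cast
    ring

lemma diffEntropy_fin1 (μ : Measure ℝ) [IsProbabilityMeasure μ] :
    diffEntropy volume (μ.map (fun x (_ : Fin 1) => x)) = diffEntropy volume μ := by
  let e := (MeasurableEquiv.funUnique (Fin 1) ℝ).symm
  have he : (fun (x : ℝ) (_ : Fin 1) => x) = e := by
    ext x i; simp [e, MeasurableEquiv.funUnique, uniqueElim]
  have hv : (volume : Measure ℝ).map e = (volume : Measure (Fin 1 → ℝ)) := by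
    have := (volume_preserving_funUnique (Fin 1) ℝ).symm.map_eq
    convert this using 2
    congr!
  rw [he, ← hv]
  unfold diffEntropy
  have hme := e.measurableEmbedding
  have h1 : (μ.map e ≪ (volume : Measure ℝ).map e) ↔ μ ≪ volume :=
    ⟨fun h => by
      have := h.map e.symm.measurable
      simpa [MeasurableEquiv.map_symm_map] using this, fun h => hme.absolutelyContinuous_map h⟩
  by_cases h : μ ≪ volume
  · rw [if_pos (h1.2 h), if_pos h, hme.lintegral_map, hme.lintegral_map]
    have hr := hme.rnDeriv_map μ volume
    congr 2
    · refine lintegral_congr_ae ?_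
      filter_upwards [hr] with x hx
      rw [hx]
    · refine lintegral_congr_ae ?_
      filter_upwards [hr] with x hx
      rw [hx]
  · rw [if_neg (fun h' => h (h1.1 h')), if_neg h]

lemma R_pos {Ω : Type*} [MeasurableSpace Ω] (μ : Measure Ω)
    [IsProbabilityMeasure μ] (X : Ω → ℝ)
    (hmeas : Measurable X) (R : ℝ) (hbdd : ∀ᵐ ω ∂μ, |X ω| ≤ R)
    (hac : μ.map X ≪ volume) : 0 < R := by
  by_contra hR
  have h0 : ∀ᵐ ω ∂μ, X ω = 0 := by
    filter_upwards [hbdd] with ω h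
    exact abs_eq_zero.1 (le_antisymm (h.trans (not_lt.1 hR)) (abs_nonneg _))
  have h1 : μ.map X {0} = 0 := hac (by simp)
  rw [Measure.map_apply hmeas (measurableSet_singleton 0)] at h1
  have h2 : ∀ᵐ ω ∂μ, False := by
    filter_upwards [h0, measure_eq_zero_iff_ae_notMem.1 h1] with ω h3 h4 using h4 h3
  simp at h2
  exact IsProbabilityMeasure.ne_zero μ h2

lemma DeltaR_zero {Ω : Type*} [MeasurableSpace Ω] (μ : Measure Ω) (X : Fin 0 → Ω → ℝ) (R R' : ℝ)
    (N m : ℕ) (δ : ℝ) : DeltaR μ X R N m δ = DeltaR μ X R' N m δ := by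
  unfold DeltaR
  ext x
  simp

lemma stmt_pos {Ω : Type*} [MeasurableSpace Ω] (μ : Measure Ω)
    [IsProbabilityMeasure μ] (n : ℕ) (X : Fin n → Ω → ℝ)
    (hmeas : ∀ i, Measurable (X i)) (R : ℝ) (hR : 0 < R)
    (hbdd : ∀ i, ∀ᵐ ω ∂μ, |X i ω| ≤ R)
    (hvol : MicrostateVolumeFormula μ X R)
    (hvoli : ∀ i, MicrostateVolumeFormula μ (fun _ : Fin 1 => X i) R)
    (hfin : ∀ i, diffEntropy volume (Measure.map (X i) μ) ≠ ⊥) :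
    Isym μ X R = IsymUpper μ X R ∧
    Isym μ X R = relEntropy (Measure.map (fun ω (i : Fin n) => X i ω) μ)
        (Measure.pi fun i => Measure.map (X i) μ) := by
  have hXm : Measurable (fun ω (i : Fin n) => X i ω) := measurable_pi_lambda _ hmeas
  haveI : ∀ i, IsProbabilityMeasure (Measure.map (X i) μ) :=
    fun i => Measure.isProbabilityMeasure_map (hmeas i).aemeasurable
  haveI : IsProbabilityMeasure (Measure.map (fun ω (i : Fin n) => X i ω) μ) :=
    Measure.isProbabilityMeasure_map hXm.aemeasurable
  have hI : ∀ i, (Measure.map (X i) μ) (Set.Icc (-R) R)ᶜ = 0 := by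
    intro i
    rw [Measure.map_apply (hmeas i) measurableSet_Icc.compl]
    refine measure_eq_zero_iff_ae_notMem.2 ?_
    filter_upwards [hbdd i] with ω h
    simpa using abs_le.1 h
  have hF := fun i => finite_entropy volume (Measure.map (X i) μ) (Set.Icc (-R) R) measurableSet_Icc
    (by simp) (hI i) (hfin i)
  have hh : ∀ i, diffEntropy volume (Measure.map (fun ω (_ : Fin 1) => X i ω) μ) =
      ((-∫ x, Real.log ((Measure.map (X i) μ).rnDeriv volume x).toReal ∂(Measure.map (X i) μ) : ℝ) : EReal) := by
    intro i
    rw [← (hF i).2.2, ← diffEntropy_fin1, Measure.map_map (by fun_prop) (hmeas i)]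
    rfl
  obtain ⟨h1, h2⟩ := main_limits μ X hmeas R hbdd hR hvol hvoli _ hh
  have hbox : (Measure.map (fun ω (i : Fin n) => X i ω) μ)
      (Set.Icc (fun _ => -R) (fun _ => R))ᶜ = 0 := by
    rw [Measure.map_apply hXm measurableSet_Icc.compl]
    refine measure_eq_zero_iff_ae_notMem.2 ?_
    filter_upwards [ae_all_iff.2 hbdd] with ω h
    simp only [Set.mem_preimage, Set.mem_compl_iff, not_not]
    exact ⟨fun i => (abs_le.1 (h i)).1, fun i => (abs_le.1 (h i)).2⟩
  have hid := rel_identity (Measure.map (fun ω (i : Fin n) => X i ω) μ)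
    (fun i => Measure.map (X i) μ)
    (fun i => by rw [Measure.map_map (measurable_pi_apply i) hXm]; rfl)
    (fun i => (hF i).1) (fun i => (hF i).2.1) _ measurableSet_Icc
    isCompact_Icc.measure_lt_top.ne hbox
  unfold Isym IsymUpper
  rw [h1, h2, hid]
  exact ⟨rfl, rfl⟩

/-- Corollaries 1.7 and 1.8: if `H(Xᵢ) > -∞` for all `i`, then
`I_sym = Ī_sym = S(μ_{(X₁,…,Xₙ)}, μ_{X₁} ⊗ ⋯ ⊗ μ_{Xₙ})`, and `I_sym = 0` iff
`X₁,…,Xₙ` are independent. -/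
theorem stmt11 {Ω : Type*} [MeasurableSpace Ω] (μ : Measure Ω)
    [IsProbabilityMeasure μ] (n : ℕ) (X : Fin n → Ω → ℝ)
    (hmeas : ∀ i, Measurable (X i)) (R : ℝ)
    (hbdd : ∀ i, ∀ᵐ ω ∂μ, |X i ω| ≤ R)
    (hvol : MicrostateVolumeFormula μ X R)
    (hvoli : ∀ i, MicrostateVolumeFormula μ (fun _ : Fin 1 => X i) R)
    (hfin : ∀ i, diffEntropy volume (Measure.map (X i) μ) ≠ ⊥) :
    Isym μ X R = IsymUpper μ X R ∧
    Isym μ X R = relEntropy (Measure.map (fun ω (i : Fin n) => X i ω) μ)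
        (Measure.pi fun i => Measure.map (X i) μ) ∧
    (Isym μ X R = 0 ↔
      Measure.map (fun ω (i : Fin n) => X i ω) μ
        = Measure.pi fun i => Measure.map (X i) μ) := by
  haveI : ∀ i, IsProbabilityMeasure (Measure.map (X i) μ) :=
    fun i => Measure.isProbabilityMeasure_map (hmeas i).aemeasurable
  haveI : IsProbabilityMeasure (Measure.map (fun ω (i : Fin n) => X i ω) μ) :=
    Measure.isProbabilityMeasure_map (measurable_pi_lambda _ hmeas).aemeasurable
  have key : Isym μ X R = IsymUpper μ X R ∧
    Isym μ X R = relEntropy (Measure.map (fun ω (i : Fin n) => X i ω) μ)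
        (Measure.pi fun i => Measure.map (X i) μ) := by
    rcases Nat.eq_zero_or_pos n with hn | hn
    · subst hn
      have hD : ∀ N m δ, DeltaR μ X R N m δ = DeltaR μ X 1 N m δ :=
        fun N m δ => DeltaR_zero μ X R 1 N m δ
      have hI : Isym μ X R = Isym μ X 1 := by
        unfold Isym symQ DeltaSymR
        simp_rw [hD]
      have hU : IsymUpper μ X R = IsymUpper μ X 1 := by
        unfold IsymUpper symQ DeltaSymR
        simp_rw [hD]
      have hV : MicrostateVolumeFormula μ X 1 := by
        unfold MicrostateVolumeFormula volQ at hvol ⊢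
        simp_rw [hD] at hvol
        exact hvol
      rw [hI, hU]
      exact stmt_pos μ 0 X hmeas 1 one_pos (fun i => i.elim0) hV (fun i => i.elim0) hfin
    · have hac : Measure.map (X ⟨0, hn⟩) μ ≪ volume := by
        by_contra h
        apply hfin ⟨0, hn⟩
        unfold diffEntropy
        rw [if_neg h]
      have hR := R_pos μ (X ⟨0, hn⟩) (hmeas _) R (hbdd _) hac
      exact stmt_pos μ n X hmeas R hR hbdd hvol hvoli hfin
  refine ⟨key.1, key.2, ?_⟩
  rw [key.2]
  exact relEntropy_zero_iff _ _
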